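/- arXiv:2210.02103 — 3 statements merged into one kernel-verified Lean document; each statement's English description precedes it below -/
import Mathlib

section
/- Let (k,′) be a differential field of characteristic zero, α, β ∈ kˣ, Q = (α,β)_k, ξ an element of an algebraic closure k̄ of k with ξ² = α, a₁, a₂, a₃ ∈ k, ϑ = a₁u + a₂v + a₃uv, and d = d_{(u,v)} + ∂_ϑ. Assume that the associated Riccati equation X′ = (a₂+a₃ξ)β + 2(a₁ξ + β′/(4β))X − (a₂−a₃ξ)X² has no solution in k̄, and that in every differential field extension of (k(ξ),′) any two distinct solutions of this Riccati equation are algebraically independent over k. Then every differential field extension of (k,′) that splits (Q,d) has transcendence degree at least 3 over k. -/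
open scoped TensorProduct

/-- A derivation on a (possibly noncommutative) ring: an additive map satisfying the
Leibniz rule. -/
structure IsRingDeriv {A : Type*} [Ring A] (d : A → A) : Prop where
  map_add : ∀ x y, d (x + y) = d x + d y
  leibniz : ∀ x y, d (x * y) = d x * y + x * d y

/-- The derivation `d` on the `k`-algebra `A` restricts to the derivation `δ` on `k`
(along `algebraMap k A`). -/
def RestrictsTo {k A : Type*} [CommRing k] [Ring A] [Algebra k A]
    (δ : k → k) (d : A → A) : Prop :=
  ∀ c : k, d (algebraMap k A c) = algebraMap k A (δ c)

/-- The differential algebra `(Q, d)` over `(k, δk)` is split by the differential field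
`(L, δL)`: there is an `L`-algebra isomorphism `L ⊗[k] Q ≃ M₂(L)` intertwining the
induced derivation `d* = δL ⊗ id + id ⊗ d` with the coordinate-wise derivation on `M₂(L)`. -/
def DiffSplits (k : Type*) [Field k] (Q : Type*) [Ring Q] [Algebra k Q]
    (d : Q → Q) (L : Type*) [Field L] [Algebra k L] (δL : L → L) : Prop :=
  ∃ D : L ⊗[k] Q → L ⊗[k] Q,
    IsRingDeriv D ∧
    (∀ (y : L) (x : Q), D (y ⊗ₜ[k] x) = δL y ⊗ₜ[k] x + y ⊗ₜ[k] d x) ∧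
    ∃ φ : (L ⊗[k] Q) ≃ₐ[L] Matrix (Fin 2) (Fin 2) L,
      ∀ z, φ (D z) = (φ z).map δL

/-- The transcendence degree of `L` over `k` is at least `n`: there are `n` algebraically
independent elements. -/
def TrdegGE (k L : Type*) [CommRing k] [CommRing L] [Algebra k L] (n : ℕ) : Prop :=
  ∃ f : Fin n → L, AlgebraicIndependent k f

/-- The transcendence degree of `L` over `k` is at most `n`: there is no algebraically
independent family of `n + 1` elements. -/
def TrdegLE (k L : Type*) [CommRing k] [CommRing L] [Algebra k L] (n : ℕ) : Prop :=
  ∀ f : Fin (n + 1) → L, ¬ AlgebraicIndependent k f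

universe u

/-!
Over an algebraic closure `M` of the splitting field, `Q` acts on `M²` in such a way that the
standard derivation is induced by the connection `w ↦ w′ + ϑ w`. This connection preserves the two
eigenlines of `u`, and the coordinates of a pair of eigenvectors solve a linear system whose
associated Riccati equation is the given one: it has infinitely many solutions in `M`.

Now let `x₁`, `x₂`, `x₃` be distinct solutions of a Riccati equation `X′ = a + bX - cX²` over an
algebraically closed field `K`, any two distinct solutions being independent. Both `(x₂ - x₁)⁻¹` and
`(x₃ - x₁)⁻¹` solve `T′ = (2c x₁ - b) T + c`, so their difference has logarithmic derivative
`2c x₁ - b`. If `t′ = p(t)`, an element algebraic over `F(t)` with logarithmic derivative in `F[t]`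
has a norm to `F(t)` whose zeros and poles can only lie at solutions of `r′ = p(r)` in `F`. When
there are none, the norm is constant. With `t = (x₂ - x₁)⁻¹` this turns an algebraic relation
between `x₂` and `x₃` over `K(x₁)` into an element algebraic over `K(x₁)` with logarithmic
derivative `2c x₁ - b`; with `t = x₁` it gives `2c x₁ - b ∈ K`, which is absurd.
-/

open Differential Polynomial IntermediateField

section DifferentialRing

/-- The `Differential` structure carried by a commutative ring with an unbundled derivation. -/
abbrev IsRingDeriv.differential {A : Type*} [CommRing A] {δ : A → A} (hδ : IsRingDeriv δ) :
    Differential A where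
  deriv := Derivation.mk' (AddMonoidHom.mk' δ hδ.map_add).toIntLinearMap fun x y => by
    simpa [mul_comm, add_comm] using hδ.leibniz x y

theorem isRingDeriv_deriv (A : Type*) [CommRing A] [Differential A] :
    IsRingDeriv fun x : A => x′ where
  map_add := map_add _
  leibniz x y := by simp [mul_comm, add_comm]

theorem differentialAlgebra_trans (k L M : Type*) [CommRing k] [CommRing L] [CommRing M]
    [Algebra k L] [Algebra L M] [Algebra k M] [IsScalarTower k L M]
    [Differential k] [Differential L] [Differential M]
    [DifferentialAlgebra k L] [DifferentialAlgebra L M] : DifferentialAlgebra k M where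
  deriv_algebraMap c := by
    simp only [IsScalarTower.algebraMap_apply k L M, deriv_algebraMap]

end DifferentialRing

section AlgebraicExtension

variable {F M : Type*} [Field F] [CharZero F] [Field M] [Algebra F M] [Algebra.IsAlgebraic F M]
  [Differential F]

variable (F M) in
/-- The extension of the derivation of `F` to an algebraic extension `M` in characteristic zero.
It exists because `M` is formally étale over `F`, so that `Ω[M⁄ℤ] = M ⊗ Ω[F⁄ℤ]`. -/
noncomputable abbrev algebraicDifferential : Differential M :=
  haveI : Algebra.FormallyEtale F M := .of_isSeparable F M
  { deriv := ((KaehlerDifferential.isBaseChange_of_formallyEtale ℤ F M).lift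
      ((Algebra.linearMap F M).compDer Differential.deriv).liftKaehlerDifferential).compDer
        (KaehlerDifferential.D ℤ M) }

theorem differentialAlgebra_algebraicDifferential :
    letI := algebraicDifferential F M
    DifferentialAlgebra F M := by
  let := algebraicDifferential F M
  have : Algebra.FormallyEtale F M := .of_isSeparable F M
  refine ⟨fun x => ?_⟩
  have h := (KaehlerDifferential.isBaseChange_of_formallyEtale ℤ F M).lift_eq
    ((Algebra.linearMap F M).compDer Differential.deriv).liftKaehlerDifferential
    (KaehlerDifferential.D ℤ F x)
  simp only [KaehlerDifferential.map_D, Derivation.liftKaehlerDifferential_comp_D] at h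
  exact h

end AlgebraicExtension

section DifferentialSubfield

variable {F M : Type*} [Field F] [Field M] [Algebra F M] [Differential M]

/-- The differential field structure on an intermediate field stable under the derivation. -/
abbrev restrictDifferential (S : IntermediateField F M) (hS : ∀ x ∈ S, x′ ∈ S) :
    Differential S where
  deriv := Derivation.mk' (AddMonoidHom.mk' (fun x : S => (⟨(x : M)′, hS x x.2⟩ : S))
    fun x y => by ext; simp).toIntLinearMap fun x y => by ext; simp

theorem differentialAlgebra_restrictDifferential (S : IntermediateField F M)
    (hS : ∀ x ∈ S, x′ ∈ S) :
    letI := restrictDifferential S hS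
    DifferentialAlgebra S M :=
  letI := restrictDifferential S hS
  ⟨fun _ => rfl⟩

variable [Differential F] [DifferentialAlgebra F M]

theorem deriv_mem_adjoin_simple {t : M} (ht : t′ ∈ F⟮t⟯) {x : M} (hx : x ∈ F⟮t⟯) : x′ ∈ F⟮t⟯ := by
  have aeval_mem (f : F[X]) : aeval t f ∈ F⟮t⟯ :=
    algebra_adjoin_le_adjoin F {t} (aeval_mem_adjoin_singleton F t)
  have deriv_aeval_mem (f : F[X]) : (aeval t f)′ ∈ F⟮t⟯ := by
    rw [deriv_aeval_eq]
    exact add_mem (aeval_mem _) (mul_mem (aeval_mem _) ht)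
  obtain ⟨r, s, rfl⟩ := (mem_adjoin_simple_iff F x).1 hx
  rw [Derivation.leibniz_div]
  exact mul_mem (pow_mem (inv_mem (aeval_mem s)) 2)
    (sub_mem (mul_mem (aeval_mem s) (deriv_aeval_mem r))
      (mul_mem (aeval_mem r) (deriv_aeval_mem s)))

theorem deriv_mem_algebraicClosure [CharZero F] {x : M} (hx : x ∈ algebraicClosure F M) :
    x′ ∈ algebraicClosure F M := by
  have hint : IsIntegral F x := (mem_algebraicClosure_iff.1 hx).isIntegral
  have hsep : aeval x (derivative (minpoly F x)) ≠ 0 :=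
    (minpoly.irreducible hint).separable.aeval_derivative_ne_zero (minpoly.aeval F x)
  have hderiv : x′ = -aeval x (mapCoeffs (minpoly F x)) / aeval x (derivative (minpoly F x)) := by
    have h := deriv_aeval_eq x (minpoly F x)
    rw [minpoly.aeval, map_zero] at h
    rw [eq_div_iff hsep]
    linear_combination -h
  have aeval_mem (f : F[X]) : aeval x f ∈ algebraicClosure F M :=
    Algebra.adjoin_le (S := (algebraicClosure F M).toSubalgebra) (Set.singleton_subset_iff.2 hx)
      (aeval_mem_adjoin_singleton F x)
  rw [hderiv]
  exact div_mem (neg_mem (aeval_mem _)) (aeval_mem _)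

end DifferentialSubfield

section LogDeriv

section Algebraic

variable {K M : Type*} [Field K] [Field M] [Algebra K M] [Differential K] [Differential M]
  [DifferentialAlgebra K M]

theorem deriv_coeff_minpoly_of_deriv_eq_mul {g : M} (hg : IsIntegral K g) {q : K}
    (hgq : g′ = algebraMap K M q * g) (i : ℕ) :
    ((minpoly K g).coeff i)′ = ((minpoly K g).natDegree - i) * q * (minpoly K g).coeff i := by
  set P := minpoly K g with hP
  set R : K[X] := mapCoeffs P + C q * (X * derivative P) - C ((P.natDegree : K) * q) * P with hR
  have hcoeff (j : ℕ) :
      R.coeff j = (P.coeff j)′ + q * (P.coeff j * j) - P.natDegree * q * P.coeff j := by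
    simp only [hR, coeff_sub, coeff_add, coeff_mapCoeffs, coeff_C_mul]
    rcases j with _ | j
    · simp
    · simp [coeff_X_mul, coeff_derivative]
  have hroot : aeval g R = 0 := by
    have h := deriv_aeval_eq g P
    rw [minpoly.aeval, map_zero, hgq] at h
    simp only [hR, map_sub, map_add, map_mul, aeval_C, aeval_X, hP, minpoly.aeval]
    linear_combination -h
  have hdeg : R.degree < P.degree := by
    rw [degree_eq_natDegree (minpoly.ne_zero hg), degree_lt_iff_coeff_zero]
    intro j hj
    rw [hcoeff]
    rcases hj.eq_or_lt with rfl | hj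
    · rw [(minpoly.monic hg).coeff_natDegree, Derivation.map_one_eq_zero]
      ring
    · rw [coeff_eq_zero_of_natDegree_lt hj]
      simp only [map_zero, zero_mul, mul_zero, add_zero, sub_zero]
  have hzero : R = 0 := by
    by_contra hne
    exact (minpoly.degree_le_of_ne_zero K g hne hroot).not_gt hdeg
  have h := hcoeff i
  rw [hzero, coeff_zero] at h
  linear_combination -h

theorem exists_logDeriv_eq_nat_mul {g : M} (hg : IsIntegral K g) (hg₀ : g ≠ 0) {q : K}
    (hgq : logDeriv g = algebraMap K M q) :
    ∃ n : ℕ, n ≠ 0 ∧ ∃ a : K, a ≠ 0 ∧ logDeriv a = n * q := by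
  have hcoeff := minpoly.coeff_zero_ne_zero hg hg₀
  refine ⟨_, (minpoly.natDegree_pos hg).ne', _, hcoeff, ?_⟩
  rw [Differential.logDeriv, div_eq_iff hcoeff,
    deriv_coeff_minpoly_of_deriv_eq_mul hg ((div_eq_iff hg₀).1 hgq), Nat.cast_zero, sub_zero]

end Algebraic

theorem exists_isCoprime_of_mem_adjoin_simple {F M : Type*} [Field F] [Field M] [Algebra F M]
    {t a : M} (ha : a ∈ F⟮t⟯) :
    ∃ r s : F[X], IsCoprime r s ∧ aeval t s ≠ 0 ∧ a = aeval t r / aeval t s := by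
  classical
  obtain ⟨r, s, rfl⟩ := (mem_adjoin_simple_iff F a).1 ha
  by_cases hs : aeval t s = 0
  · exact ⟨0, 1, isCoprime_one_right, by simp, by simp [hs]⟩
  have hs₀ : s ≠ 0 := by
    rintro rfl
    exact hs (map_zero _)
  have aeval_gcd_mul {f : F[X]} (hf : gcd r s ∣ f) :
      aeval t (gcd r s) * aeval t (f / gcd r s) = aeval t f := by
    rw [← map_mul, EuclideanDomain.mul_div_cancel' (gcd_ne_zero_of_right hs₀) hf]
  rw [← aeval_gcd_mul (gcd_dvd_right r s)] at hs ⊢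
  rw [← aeval_gcd_mul (gcd_dvd_left r s), mul_div_mul_left _ _ (left_ne_zero_of_mul hs)]
  exact ⟨_, _, isCoprime_div_gcd_div_gcd hs₀, right_ne_zero_of_mul hs, rfl⟩

section Exponential

variable {E : Type*} [Field E] [CharZero E] [IsAlgClosed E] [Differential E]

/- A root `r` of `f` of multiplicity `m` has multiplicity `m - 1` in `implicitDeriv p f`, unless `r`
is a solution of the differential equation. -/
theorem natDegree_eq_zero_of_dvd_implicitDeriv {p f : E[X]} (hp : ∀ r : E, r′ ≠ p.eval r)
    (hf : f ≠ 0) (hdvd : f ∣ implicitDeriv p f) : f.natDegree = 0 := by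
  by_contra hdeg
  obtain ⟨r, hr⟩ := IsAlgClosed.exists_root f (mt natDegree_eq_of_degree_eq_some hdeg)
  obtain ⟨s, hs, hrs⟩ := exists_eq_pow_rootMultiplicity_mul_and_not_dvd f hf r
  obtain ⟨m, hm⟩ : ∃ m, f.rootMultiplicity r = m + 1 :=
    Nat.exists_eq_succ_of_ne_zero ((rootMultiplicity_pos hf).2 hr).ne'
  rw [hm] at hs
  have hderiv : implicitDeriv p f = (X - C r) ^ m *
      (((m : E[X]) + 1) * (p - C r′) * s + (X - C r) * implicitDeriv p s) := by
    rw [hs, Derivation.leibniz, Derivation.leibniz_pow]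
    simp only [smul_eq_mul, nsmul_eq_mul, map_sub, implicitDeriv_X, implicitDeriv_C,
      Nat.cast_add, Nat.cast_one, Nat.add_sub_cancel]
    ring
  have hdvd_pow : (X - C r) ^ m * (X - C r) ∣ (X - C r) ^ m *
      (((m : E[X]) + 1) * (p - C r′) * s + (X - C r) * implicitDeriv p s) := by
    rw [← hderiv, ← pow_succ]
    exact (Dvd.intro _ hs.symm).trans hdvd
  have hdvd_mul : X - C r ∣ ((m : E[X]) + 1) * (p - C r′) * s :=
    (dvd_add_left (dvd_mul_right _ _)).1
      ((mul_dvd_mul_iff_left (pow_ne_zero m (X_sub_C_ne_zero r))).1 hdvd_pow)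
  have hroot : X - C r ∣ ((m : E[X]) + 1) * (p - C r′) :=
    ((prime_X_sub_C r).dvd_or_dvd hdvd_mul).resolve_right hrs
  rw [dvd_iff_isRoot] at hroot
  simp only [IsRoot, eval_mul, eval_add, eval_natCast, eval_one, eval_sub, eval_C] at hroot
  exact hp r (sub_eq_zero.1 ((mul_eq_zero.1 hroot).resolve_left (Nat.cast_add_one_ne_zero m))).symm

variable {M : Type*} [Field M] [Algebra E M] [Differential M] [DifferentialAlgebra E M]

theorem exists_logDeriv_eq_of_mem_adjoin_simple {t : M} (ht : Transcendental E t) {p q : E[X]}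
    (htp : t′ = aeval t p) (hp : ∀ r : E, r′ ≠ p.eval r) {a : M} (ha : a ∈ E⟮t⟯) (ha₀ : a ≠ 0)
    (haq : logDeriv a = aeval t q) : ∃ e : E, e ≠ 0 ∧ C (logDeriv e) = q := by
  have inj : Function.Injective (aeval t : E[X] →ₐ[E] M) := transcendental_iff_injective.1 ht
  obtain ⟨r, s, hrs, hst, rfl⟩ := exists_isCoprime_of_mem_adjoin_simple ha
  have hrt : aeval t r ≠ 0 := (div_ne_zero_iff.1 ha₀).1
  have hcross : implicitDeriv p r * s - r * implicitDeriv p s = q * r * s := by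
    apply inj
    rw [logDeriv_div _ _ hrt hst, Differential.logDeriv, Differential.logDeriv,
      deriv_aeval_eq_implicitDeriv t p htp, deriv_aeval_eq_implicitDeriv t p htp,
      div_sub_div _ _ hrt hst, div_eq_iff (mul_ne_zero hrt hst)] at haq
    simpa only [map_sub, map_mul, mul_assoc] using haq
  have hr : r ∣ implicitDeriv p r :=
    hrs.dvd_of_dvd_mul_right ⟨implicitDeriv p s + q * s, by linear_combination hcross⟩
  have hs : s ∣ implicitDeriv p s :=
    hrs.symm.dvd_of_dvd_mul_left ⟨implicitDeriv p r - q * r, by linear_combination -hcross⟩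
  obtain ⟨x, rfl⟩ : ∃ x, r = C x := ⟨_, eq_C_of_natDegree_eq_zero
    (natDegree_eq_zero_of_dvd_implicitDeriv hp (ne_zero_of_map hrt) hr)⟩
  obtain ⟨y, rfl⟩ : ∃ y, s = C y := ⟨_, eq_C_of_natDegree_eq_zero
    (natDegree_eq_zero_of_dvd_implicitDeriv hp (ne_zero_of_map hst) hs)⟩
  simp only [aeval_C] at hrt hst haq ha₀
  refine ⟨x / y, (map_ne_zero (algebraMap E M)).1 (by rwa [map_div₀]), inj ?_⟩
  rw [← haq, aeval_C, ← Differential.logDeriv_algebraMap, map_div₀]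

theorem exists_logDeriv_eq_of_isAlgebraic_adjoin_simple {t : M} (ht : Transcendental E t)
    {p q : E[X]} (htp : t′ = aeval t p) (hp : ∀ r : E, r′ ≠ p.eval r) {g : M}
    (hg : IsAlgebraic E⟮t⟯ g) (hg₀ : g ≠ 0) (hgq : logDeriv g = aeval t q) :
    ∃ e : E, e ≠ 0 ∧ C (logDeriv e) = q := by
  have aeval_mem (f : E[X]) : aeval t f ∈ E⟮t⟯ :=
    algebra_adjoin_le_adjoin E {t} (aeval_mem_adjoin_singleton E t)
  have hstable : ∀ x ∈ E⟮t⟯, x′ ∈ E⟮t⟯ := fun _ => deriv_mem_adjoin_simple (htp ▸ aeval_mem p)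
  let := restrictDifferential E⟮t⟯ hstable
  have := differentialAlgebra_restrictDifferential E⟮t⟯ hstable
  obtain ⟨n, hn, a, ha₀, ha⟩ := exists_logDeriv_eq_nat_mul (K := E⟮t⟯) hg.isIntegral hg₀
    (q := ⟨aeval t q, aeval_mem q⟩) hgq
  have ha' : logDeriv (a : M) = aeval t (C (n : E) * q) := by
    rw [map_mul, aeval_C, map_natCast]
    have := congrArg (algebraMap E⟮t⟯ M) ha
    rw [← Differential.logDeriv_algebraMap] at this
    exact this
  obtain ⟨e, he₀, he⟩ :=
    exists_logDeriv_eq_of_mem_adjoin_simple ht htp hp a.2 (by simpa using ha₀) ha'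
  obtain ⟨e', rfl⟩ := IsAlgClosed.exists_pow_nat_eq e (Nat.pos_of_ne_zero hn)
  have hn' : C (n : E) ≠ 0 := C_ne_zero.2 (Nat.cast_ne_zero.2 hn)
  refine ⟨e', ne_zero_pow hn he₀, mul_left_cancel₀ hn' ?_⟩
  rw [← he, Differential.logDeriv_pow, C_mul]

end Exponential

end LogDeriv

section Riccati

/-- `x` is a solution of the Riccati equation `X′ = a + b X - c X²`; the coefficients may lie in
a base ring of the differential ring containing `x`. -/
def IsRiccatiSolution {F M : Type*} [CommRing F] [CommRing M] [Algebra F M] [Differential M]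
    (a b c : F) (x : M) : Prop :=
  x′ = algebraMap F M a + algebraMap F M b * x - algebraMap F M c * x ^ 2

namespace IsRiccatiSolution

section Tower

variable {F E M : Type*} [CommRing F] [Field E] [Field M] [Algebra F E] [Algebra F M]
  [Algebra E M] [IsScalarTower F E M] [Differential M] {a b c : F}

theorem algebraMap_coeff_iff {x : M} :
    IsRiccatiSolution (algebraMap F E a) (algebraMap F E b) (algebraMap F E c) x ↔
      IsRiccatiSolution a b c x := by
  simp only [IsRiccatiSolution, ← IsScalarTower.algebraMap_apply]

theorem algebraMap_iff [Differential E] [DifferentialAlgebra E M] {x : E} :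
    IsRiccatiSolution a b c (algebraMap E M x) ↔ IsRiccatiSolution a b c x := by
  simp only [IsRiccatiSolution, deriv_algebraMap, IsScalarTower.algebraMap_apply F E M, ← map_mul,
    ← map_pow, ← map_add, ← map_sub, (algebraMap E M).injective.eq_iff]

end Tower

variable {F M : Type*} [CommRing F] [Field M] [Algebra F M] [Differential M] {a b c : F}

theorem deriv_inv_sub {x y : M} (hx : IsRiccatiSolution a b c x) (hy : IsRiccatiSolution a b c y)
    (hxy : y ≠ x) : ((y - x)⁻¹)′ =
      (2 * algebraMap F M c * x - algebraMap F M b) * (y - x)⁻¹ + algebraMap F M c := by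
  have hne : y - x ≠ 0 := sub_ne_zero.2 hxy
  rw [IsRiccatiSolution] at hx hy
  rw [Derivation.leibniz_inv, map_sub, hx, hy, smul_eq_mul]
  field_simp
  ring

theorem logDeriv_inv_sub_sub_inv_sub {x₁ x₂ x₃ : M} (h₁ : IsRiccatiSolution a b c x₁)
    (h₂ : IsRiccatiSolution a b c x₂) (h₃ : IsRiccatiSolution a b c x₃) (h₂₁ : x₂ ≠ x₁)
    (h₃₁ : x₃ ≠ x₁) (h₃₂ : x₃ ≠ x₂) :
    logDeriv ((x₃ - x₁)⁻¹ - (x₂ - x₁)⁻¹) = 2 * algebraMap F M c * x₁ - algebraMap F M b := by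
  have hne : (x₃ - x₁)⁻¹ - (x₂ - x₁)⁻¹ ≠ 0 :=
    sub_ne_zero.2 fun h => h₃₂ (sub_left_inj.1 (inv_injective h))
  rw [Differential.logDeriv, div_eq_iff hne, map_sub, h₁.deriv_inv_sub h₂ h₂₁,
    h₁.deriv_inv_sub h₃ h₃₁]
  ring

theorem add_inv {x r : M} (hx : IsRiccatiSolution a b c x) (hr : r ≠ 0)
    (hr' : r′ = (2 * algebraMap F M c * x - algebraMap F M b) * r + algebraMap F M c) :
    IsRiccatiSolution a b c (x + r⁻¹) := by
  rw [IsRiccatiSolution] at hx ⊢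
  rw [map_add, Derivation.leibniz_inv, hx, hr', smul_eq_mul]
  field_simp
  ring

end IsRiccatiSolution

section AlgebraicallyClosed

variable {F M : Type*} [Field F] [CharZero F] [IsAlgClosed F] [Differential F]
  [Field M] [Algebra F M] [Differential M] [DifferentialAlgebra F M] {a b c : F}

theorem logDeriv_ne_of_isAlgebraic_adjoin_riccatiSolution (hc : c ≠ 0)
    (hF : ∀ r : F, ¬ IsRiccatiSolution a b c r) {x : M} (hx : Transcendental F x)
    (hsol : IsRiccatiSolution a b c x) {e : M} (he : IsAlgebraic F⟮x⟯ e) (he₀ : e ≠ 0) :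
    logDeriv e ≠ 2 * algebraMap F M c * x - algebraMap F M b := by
  intro h
  have hp (r : F) : r′ ≠ (C a + C b * X - C c * X ^ 2).eval r := by
    simpa [IsRiccatiSolution] using hF r
  have hxp : x′ = aeval x (C a + C b * X - C c * X ^ 2) := by
    simpa [IsRiccatiSolution] using hsol
  obtain ⟨f, -, hf⟩ := exists_logDeriv_eq_of_isAlgebraic_adjoin_simple hx hxp hp he he₀
    (q := C (2 * c) * X - C b)
    (by simpa only [map_sub, map_mul, map_ofNat, aeval_C, aeval_X] using h)
  have hcoeff := congrArg (coeff · 1) hf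
  simp only [coeff_C_succ, coeff_sub, coeff_C_mul, coeff_X_one, mul_one, sub_zero] at hcoeff
  exact mul_ne_zero two_ne_zero hc hcoeff.symm

theorem exists_logDeriv_eq_of_isAlgebraic_adjoin_riccatiSolution (hc : c ≠ 0) {x₁ : F}
    (h₁ : IsRiccatiSolution a b c x₁) (huniq : ∀ y : F, IsRiccatiSolution a b c y → y = x₁)
    {x₂ x₃ : M} (h₂ : IsRiccatiSolution a b c x₂) (h₃ : IsRiccatiSolution a b c x₃)
    (hx₂ : Transcendental F x₂) (h₃₁ : x₃ ≠ algebraMap F M x₁) (h₃₂ : x₃ ≠ x₂)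
    (hx₃ : IsAlgebraic F⟮x₂⟯ x₃) : ∃ e : F, e ≠ 0 ∧ logDeriv e = 2 * c * x₁ - b := by
  have h₁' : IsRiccatiSolution a b c (algebraMap F M x₁) := IsRiccatiSolution.algebraMap_iff.2 h₁
  have h₂₁ : x₂ ≠ algebraMap F M x₁ := by
    rintro rfl
    exact hx₂ (isAlgebraic_algebraMap x₁)
  set t := (x₂ - algebraMap F M x₁)⁻¹ with ht
  have hx₂t : x₂ = algebraMap F M x₁ + t⁻¹ := by
    rw [ht, inv_inv, add_sub_cancel]
  have ht_trans : Transcendental F t := fun halg =>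
    hx₂ (hx₂t ▸ (isAlgebraic_algebraMap x₁).add halg.inv)
  have htp : t′ = aeval t (C (2 * c * x₁ - b) * X + C c) := by
    simpa only [map_add, map_sub, map_mul, map_ofNat, aeval_C, aeval_X]
      using h₁'.deriv_inv_sub h₂ h₂₁
  have hp (r : F) : r′ ≠ (C (2 * c * x₁ - b) * X + C c).eval r := by
    simp only [eval_add, eval_mul, eval_C, eval_X]
    intro hr
    have hr₀ : r ≠ 0 := by
      rintro rfl
      exact hc (by simpa using hr.symm)
    simpa [hr₀] using huniq _ (h₁.add_inv hr₀ hr)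
  have hle : F⟮x₂⟯ ≤ F⟮t⟯ := by
    rw [adjoin_simple_le_iff, hx₂t]
    exact add_mem (F⟮t⟯.algebraMap_mem x₁) (inv_mem (mem_adjoin_simple_self F t))
  have halg : IsAlgebraic F⟮t⟯ ((x₃ - algebraMap F M x₁)⁻¹ - t) :=
    ((hx₃.tower_top_of_subalgebra_le hle).sub (isAlgebraic_algebraMap
      (algebraMap F F⟮t⟯ x₁))).inv.sub (isAlgebraic_algebraMap (AdjoinSimple.gen F t))
  obtain ⟨e, he₀, he⟩ := exists_logDeriv_eq_of_isAlgebraic_adjoin_simple ht_trans htp hp halg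
    (sub_ne_zero.2 fun h => h₃₂ (sub_left_inj.1 (inv_injective h))) (q := C (2 * c * x₁ - b)) (by
      simpa only [map_sub, map_mul, map_ofNat, aeval_C]
        using h₁'.logDeriv_inv_sub_sub_inv_sub h₂ h₃ h₂₁ h₃₁ h₃₂)
  exact ⟨e, he₀, C_injective he⟩

end AlgebraicallyClosed

end Riccati

section AlgebraicIndependence

theorem algebraicIndependent_pair_iff {F M : Type*} [Field F] [Field M] [Algebra F M] {x y : M} :
    AlgebraicIndependent F ![x, y] ↔ Transcendental F y ∧ Transcendental F⟮y⟯ x := by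
  have hcons : (fun o : Option (Fin 1) => o.elim x ![y]) ∘ finSuccEquiv 1 = ![x, y] := by
    funext i
    fin_cases i <;> rfl
  rw [← hcons, algebraicIndependent_equiv, AlgebraicIndependent.option_iff,
    algebraicIndependent_iff_transcendental, Matrix.range_cons, Matrix.range_empty, Set.union_empty,
    Transcendental, Transcendental, Transcendental, IntermediateField.isAlgebraic_adjoin_iff]

theorem TrdegGE.add {F E M : Type*} [CommRing F] [CommRing E] [CommRing M] [Algebra F E]
    [Algebra E M] [Algebra F M] [IsScalarTower F E M] {m n : ℕ} (hE : TrdegGE F E m)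
    (hM : TrdegGE E M n) : TrdegGE F M (m + n) := by
  obtain ⟨f, hf⟩ := hE
  obtain ⟨g, hg⟩ := hM
  refine ⟨_, (algebraicIndependent_equiv
    (finSumFinEquiv.symm.trans (Equiv.sumComm (Fin m) (Fin n)))).2 (hf.sumElim_comp hg)⟩

theorem trdegGE_iff_le_trdeg {F M : Type*} [Field F] [Field M] [Algebra F M] {n : ℕ} :
    TrdegGE F M n ↔ n ≤ Algebra.trdeg F M := by
  constructor
  · rintro ⟨f, hf⟩
    simpa using hf.lift_cardinalMk_le_trdeg
  · intro h
    obtain ⟨s, hs⟩ := exists_isTranscendenceBasis F M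
    have hn : Cardinal.lift (Cardinal.mk (Fin n)) ≤ Cardinal.lift (Cardinal.mk s) := by
      simpa [hs.cardinalMk_eq_trdeg] using h
    obtain ⟨g⟩ := Cardinal.lift_mk_le'.1 hn
    exact ⟨_, hs.1.comp g g.injective⟩

theorem TrdegGE.of_isAlgebraic {F : Type*} {E M : Type u} [Field F] [Field E] [Field M]
    [Algebra F E] [Algebra E M] [Algebra F M] [IsScalarTower F E M] [Algebra.IsAlgebraic E M]
    {n : ℕ} (h : TrdegGE F M n) : TrdegGE F E n := by
  rw [trdegGE_iff_le_trdeg] at h ⊢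
  rwa [← trdeg_add_eq F E (A := M), trdeg_eq_zero (R := E), add_zero] at h

end AlgebraicIndependence

section ThreeSolutions

variable {K M : Type*} [Field K] [CharZero K] [Differential K] [Field M] [IsAlgClosed M]
  [Algebra K M] [Differential M] [DifferentialAlgebra K M]

theorem algebraicIndependent_of_logDeriv_ne {a b c x₁ : K} (hc : c ≠ 0)
    (h₁ : IsRiccatiSolution a b c x₁)
    (huniq : ∀ y : M, IsAlgebraic K y → IsRiccatiSolution a b c y → y = algebraMap K M x₁)
    (hexp : ∀ e : M, IsAlgebraic K e → e ≠ 0 → logDeriv e ≠ algebraMap K M (2 * c * x₁ - b))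
    {x₂ x₃ : M} (h₂ : IsRiccatiSolution a b c x₂) (h₃ : IsRiccatiSolution a b c x₃)
    (h₂₁ : x₂ ≠ algebraMap K M x₁) (h₃₁ : x₃ ≠ algebraMap K M x₁) (h₃₂ : x₃ ≠ x₂) :
    AlgebraicIndependent K ![x₃, x₂] := by
  let E := algebraicClosure K M
  have hstable : ∀ x ∈ E, x′ ∈ E := fun _ => deriv_mem_algebraicClosure
  let := restrictDifferential E hstable
  have := differentialAlgebra_restrictDifferential E hstable
  have : DifferentialAlgebra K E := ⟨fun x => Subtype.ext (deriv_algebraMap x)⟩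
  have : IsAlgClosed E := (algebraicClosure.isAlgClosure K M).1
  have isAlgebraic_coe (y : E) : IsAlgebraic K (algebraMap E M y) := mem_algebraicClosure_iff.1 y.2
  suffices AlgebraicIndependent E ![x₃, x₂] from
    this.restrictScalars (algebraMap K E).injective
  have hE (y : E) (hy : IsRiccatiSolution a b c y) : y = algebraMap K E x₁ :=
    Subtype.ext (huniq y (isAlgebraic_coe y) (IsRiccatiSolution.algebraMap_iff.2 hy))
  have hx₂ : Transcendental E x₂ := fun halg => h₂₁ (huniq x₂ (halg.restrictScalars K) h₂)
  refine algebraicIndependent_pair_iff.2 ⟨hx₂, fun halg => ?_⟩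
  obtain ⟨e, he₀, he⟩ := exists_logDeriv_eq_of_isAlgebraic_adjoin_riccatiSolution
    (F := E) (a := algebraMap K E a) (b := algebraMap K E b) (c := algebraMap K E c)
    ((_root_.map_ne_zero _).2 hc)
    (IsRiccatiSolution.algebraMap_coeff_iff.2 (IsRiccatiSolution.algebraMap_iff.2 h₁))
    (fun y hy => hE y (IsRiccatiSolution.algebraMap_coeff_iff.1 hy))
    (IsRiccatiSolution.algebraMap_coeff_iff.2 h₂) (IsRiccatiSolution.algebraMap_coeff_iff.2 h₃)
    hx₂ h₃₁ h₃₂ halg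
  refine hexp (algebraMap E M e) (isAlgebraic_coe e) ((_root_.map_ne_zero _).2 he₀) ?_
  rw [Differential.logDeriv_algebraMap, he]
  simp only [map_sub, map_mul, map_ofNat, ← IsScalarTower.algebraMap_apply]

theorem trdegGE_three_of_isAlgClosed [IsAlgClosed K] {a b c : K} (hc : c ≠ 0)
    (hind : ∀ x y : M, IsRiccatiSolution a b c x → IsRiccatiSolution a b c y → x ≠ y →
      AlgebraicIndependent K ![x, y])
    {x₁ x₂ x₃ : M} (h₁ : IsRiccatiSolution a b c x₁) (h₂ : IsRiccatiSolution a b c x₂)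
    (h₃ : IsRiccatiSolution a b c x₃) (h₂₁ : x₂ ≠ x₁) (h₃₁ : x₃ ≠ x₁) (h₃₂ : x₃ ≠ x₂) :
    TrdegGE K M 3 := by
  have transcendental_adjoin (y : M) (hy : IsRiccatiSolution a b c y) (hne : y ≠ x₁) :
      Transcendental K⟮x₁⟯ y := (algebraicIndependent_pair_iff.1 (hind y x₁ hy h₁ hne)).2
  have hx₁ : Transcendental K x₁ := (hind x₂ x₁ h₂ h₁ h₂₁).transcendental 1
  have hK (r : K) : ¬ IsRiccatiSolution a b c r := fun hr =>
    transcendental_adjoin (algebraMap K M r) (IsRiccatiSolution.algebraMap_iff.2 hr)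
      (fun h => hx₁ (h ▸ isAlgebraic_algebraMap r)) (isAlgebraic_algebraMap (algebraMap K K⟮x₁⟯ r))
  have hstable : ∀ x ∈ K⟮x₁⟯, x′ ∈ K⟮x₁⟯ := by
    have hgen : x₁ ∈ K⟮x₁⟯ := mem_adjoin_simple_self K x₁
    have hcoeff := K⟮x₁⟯.algebraMap_mem
    refine fun _ => deriv_mem_adjoin_simple ?_
    rw [show x₁′ = _ from h₁]
    exact sub_mem (add_mem (hcoeff a) (mul_mem (hcoeff b) hgen))
      (mul_mem (hcoeff c) (pow_mem hgen 2))
  let := restrictDifferential K⟮x₁⟯ hstable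
  have := differentialAlgebra_restrictDifferential K⟮x₁⟯ hstable
  have hone : TrdegGE K K⟮x₁⟯ 1 :=
    ⟨![AdjoinSimple.gen K x₁], algebraicIndependent_iff_transcendental.2 fun halg =>
      hx₁ halg.algebraMap⟩
  have htwo : AlgebraicIndependent K⟮x₁⟯ ![x₃, x₂] := by
    refine algebraicIndependent_of_logDeriv_ne (K := K⟮x₁⟯) (a := algebraMap K K⟮x₁⟯ a)
      (b := algebraMap K K⟮x₁⟯ b) (c := algebraMap K K⟮x₁⟯ c) (x₁ := AdjoinSimple.gen K x₁)
      ((_root_.map_ne_zero _).2 hc) ?_ ?_ ?_ (IsRiccatiSolution.algebraMap_coeff_iff.2 h₂)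
        (IsRiccatiSolution.algebraMap_coeff_iff.2 h₃) h₂₁ h₃₁ h₃₂
    · rw [IsRiccatiSolution.algebraMap_coeff_iff, ← IsRiccatiSolution.algebraMap_iff (M := M)]
      exact h₁
    · intro y halg hy
      by_contra hne
      exact transcendental_adjoin y (IsRiccatiSolution.algebraMap_coeff_iff.1 hy) hne halg
    · intro e he he₀ h
      refine logDeriv_ne_of_isAlgebraic_adjoin_riccatiSolution hc hK hx₁ h₁ he he₀ ?_
      simpa only [map_sub, map_mul, map_ofNat, ← IsScalarTower.algebraMap_apply,
        AdjoinSimple.algebraMap_gen] using h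
  exact hone.add ⟨_, htwo⟩

theorem trdegGE_three {k : Type*} [Field k] [CharZero k] [Differential k] [Algebra k M]
    [DifferentialAlgebra k M] {a b c : M} (ha : IsAlgebraic k a) (hb : IsAlgebraic k b)
    (hc : IsAlgebraic k c) (hc₀ : c ≠ 0)
    (hind : ∀ x y : M, IsRiccatiSolution a b c x → IsRiccatiSolution a b c y → x ≠ y →
      AlgebraicIndependent k ![x, y])
    {x₁ x₂ x₃ : M} (h₁ : IsRiccatiSolution a b c x₁) (h₂ : IsRiccatiSolution a b c x₂)
    (h₃ : IsRiccatiSolution a b c x₃) (h₂₁ : x₂ ≠ x₁) (h₃₁ : x₃ ≠ x₁) (h₃₂ : x₃ ≠ x₂) :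
    TrdegGE k M 3 := by
  let F := algebraicClosure k M
  have hstable : ∀ x ∈ F, x′ ∈ F := fun _ => deriv_mem_algebraicClosure
  let := restrictDifferential F hstable
  have := differentialAlgebra_restrictDifferential F hstable
  have : IsAlgClosed F := (algebraicClosure.isAlgClosure k M).1
  lift a to F using mem_algebraicClosure_iff.2 ha
  lift b to F using mem_algebraicClosure_iff.2 hb
  lift c to F using mem_algebraicClosure_iff.2 hc
  have hF (x : M) : IsRiccatiSolution (a : M) (b : M) (c : M) x ↔ IsRiccatiSolution a b c x :=
    IsRiccatiSolution.algebraMap_coeff_iff (E := M) (a := a) (b := b) (c := c)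
  simp only [hF] at hind h₁ h₂ h₃
  obtain ⟨f, hf⟩ := trdegGE_three_of_isAlgClosed (K := F) (fun h => hc₀ (by simp [h]))
    (fun x y hx hy hxy => (hind x y hx hy hxy).extendScalars F) h₁ h₂ h₃ h₂₁ h₃₁ h₃₂
  exact ⟨f, hf.restrictScalars (algebraMap k F).injective⟩

end ThreeSolutions

section Connection

open scoped Matrix

variable {n M : Type*} [Fintype n] [CommRing M] [Differential M]

/-- The connection `∇ w = w′ + θ w` on column vectors. The derivation it induces on matrices is
`A ↦ A′ + (θ A - A θ)`. -/
def connection (θ : Matrix n n M) (w : n → M) : n → M :=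
  (fun i => (w i)′) + θ *ᵥ w

theorem connection_smul (θ : Matrix n n M) (m : M) (w : n → M) :
    connection θ (m • w) = m′ • w + m • connection θ w := by
  ext i
  simp only [connection, Matrix.mulVec_smul, Pi.add_apply, Pi.smul_apply, smul_eq_mul,
    Derivation.leibniz]
  ring

theorem connection_mulVec {A θ : Matrix n n M} {σ : M}
    (hA : A.map (fun x => x′) = σ • A + (A * θ - θ * A)) (w : n → M) :
    connection θ (A *ᵥ w) = σ • (A *ᵥ w) + A *ᵥ connection θ w := by
  have deriv_mulVec : (fun i => ((A *ᵥ w) i)′) =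
      A.map (fun x => x′) *ᵥ w + A *ᵥ fun i => (w i)′ := by
    ext i
    simp only [Matrix.mulVec, dotProduct, Pi.add_apply, Matrix.map_apply, map_sum,
      Derivation.leibniz, smul_eq_mul, Finset.sum_add_distrib, mul_comm, add_comm]
  simp only [connection, deriv_mulVec, hA, Matrix.add_mulVec, Matrix.sub_mulVec,
    Matrix.smul_mulVec, Matrix.mulVec_add, Matrix.mulVec_mulVec]
  abel

end Connection

section LinearSystem

variable {M : Type*} [Field M] [Differential M] {p q r s : M}

theorem isRiccatiSolution_div {y z : M} (hy₀ : y ≠ 0) (hy : y′ = p * y + q * z)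
    (hz : z′ = r * y + s * z) : IsRiccatiSolution r (s - p) q (z / y) := by
  simp only [IsRiccatiSolution, Algebra.algebraMap_self, RingHom.id_apply, Derivation.leibniz_div,
    hy, hz, smul_eq_mul]
  field_simp
  ring

theorem infinite_setOf_isRiccatiSolution_of_linearIndependent [CharZero M] {y z : Fin 2 → M}
    (hyz : LinearIndependent M ![y, z]) (hy : ∀ i, (y i)′ = p * y i + q * z i)
    (hz : ∀ i, (z i)′ = r * y i + s * z i) :
    {x : M | IsRiccatiSolution r (s - p) q x}.Infinite := by
  have hdet : y 0 * z 1 - y 1 * z 0 ≠ 0 := by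
    have h := (Matrix.isUnit_iff_isUnit_det _).1
      (Matrix.linearIndependent_rows_iff_isUnit (A := Matrix.of ![y, z]).1 hyz)
    simpa [Matrix.det_fin_two] using h.ne_zero
  have deriv_eq (n : ℕ) : (y 0 + n * y 1)′ = p * (y 0 + n * y 1) + q * (z 0 + n * z 1) ∧
      (z 0 + n * z 1)′ = r * (y 0 + n * y 1) + s * (z 0 + n * z 1) := by
    constructor <;>
    · simp only [map_add, Derivation.leibniz, Derivation.map_natCast, smul_eq_mul, hy, hz]
      ring
  have subsingleton_zeros : {n : ℕ | y 0 + n * y 1 = 0}.Subsingleton := by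
    intro m hm n hn
    rw [Set.mem_ofPred_eq] at hm hn
    by_contra hmn
    have hmn' : (m : M) - n ≠ 0 := sub_ne_zero.2 (Nat.cast_injective.ne hmn)
    have hy₁ : y 1 = 0 := (mul_eq_zero.1
      (by linear_combination hm - hn : ((m : M) - n) * y 1 = 0)).resolve_left hmn'
    rw [hy₁, mul_zero, add_zero] at hm
    exact hdet (by rw [hm, hy₁]; ring)
  have injOn : Set.InjOn (fun n : ℕ => (z 0 + n * z 1) / (y 0 + n * y 1))
      {n : ℕ | y 0 + n * y 1 = 0}ᶜ := by
    intro m hm n hn hmn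
    rw [div_eq_div_iff hm hn] at hmn
    have h : ((m : M) - n) * (y 0 * z 1 - y 1 * z 0) = 0 := by linear_combination hmn
    exact_mod_cast sub_eq_zero.1 ((mul_eq_zero.1 h).resolve_right hdet)
  refine (subsingleton_zeros.finite.infinite_compl.image injOn).mono ?_
  rintro _ ⟨n, hn, rfl⟩
  exact isRiccatiSolution_div hn (deriv_eq n).1 (deriv_eq n).2

end LinearSystem

section AnticommutingMatrices

open scoped Matrix

theorem mulVec_mulVec_eq_neg_smul {n M : Type*} [Fintype n] [CommRing M]
    {U V : Matrix n n M} {ε : M} {y : n → M} (hVU : V * U = -(U * V)) (hUy : U *ᵥ y = ε • y) :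
    U *ᵥ (V *ᵥ y) = -ε • V *ᵥ y := by
  rw [Matrix.mulVec_mulVec, ← neg_eq_iff_eq_neg.2 hVU, Matrix.neg_mulVec, ← Matrix.mulVec_mulVec,
    hUy, Matrix.mulVec_smul, neg_smul]

variable {n M : Type*} [Fintype n] [DecidableEq n] [Field M] [CharZero M] {U V : Matrix n n M}
  {ε β : M}

theorem exists_mulVec_eq_smul_of_anticommute [Nonempty n] (hU : U * U = ε ^ 2 • 1)
    (hV : V * V = β • 1) (hVU : V * U = -(U * V)) (hε : ε ≠ 0) (hβ : β ≠ 0) :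
    ∃ y ≠ 0, U *ᵥ y = ε • y := by
  have hne : U + ε • 1 ≠ 0 := by
    intro h
    have hUε : U = -(ε • 1) := eq_neg_of_add_eq_zero_left h
    have hV₀ : (2 * ε) • V = 0 := by
      rw [hUε] at hVU
      simp only [mul_neg, neg_mul, smul_mul_assoc, mul_smul_comm, one_mul, mul_one, neg_neg] at hVU
      rw [mul_smul, two_smul]
      nth_rewrite 1 [← hVU]
      exact neg_add_cancel _
    rw [(smul_eq_zero_iff_right (mul_ne_zero two_ne_zero hε)).1 hV₀, zero_mul] at hV
    exact smul_ne_zero hβ one_ne_zero hV.symm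
  obtain ⟨w, hw⟩ : ∃ w, (U + ε • 1) *ᵥ w ≠ 0 := by
    by_contra! h
    exact hne (Matrix.ext_of_mulVec_single fun i => by rw [h, Matrix.zero_mulVec])
  refine ⟨_, hw, ?_⟩
  rw [Matrix.mulVec_mulVec, mul_add, hU, ← Matrix.smul_mulVec]
  congr 1
  rw [mul_smul_comm, mul_one, smul_add, smul_smul, ← pow_two, add_comm]

theorem linearIndependent_pair_mulVec (hV : V * V = β • 1) (hVU : V * U = -(U * V)) (hε : ε ≠ 0)
    (hβ : β ≠ 0) {y : n → M} (hy : y ≠ 0) (hUy : U *ᵥ y = ε • y) :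
    LinearIndependent M ![y, V *ᵥ y] := by
  refine (LinearIndependent.pair_iff' hy).2 fun a ha => ?_
  have hU := mulVec_mulVec_eq_neg_smul hVU hUy
  rw [← ha, Matrix.mulVec_smul, hUy] at hU
  have h : (2 * ε * a) • y = 0 := by
    linear_combination (norm := module) hU
  have ha₀ : a = 0 := by simpa [hε, hy] using h
  rw [ha₀, zero_smul] at ha
  have hβy : β • y = 0 := by
    rw [← Matrix.one_mulVec y, ← Matrix.smul_mulVec, ← hV, ← Matrix.mulVec_mulVec, ← ha,
      Matrix.mulVec_zero]
  exact smul_ne_zero hβ hy hβy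

theorem exists_eq_smul_of_mulVec_eq_smul {M : Type*} [Field M] [CharZero M]
    {U V : Matrix (Fin 2) (Fin 2) M} {ε β : M} (hV : V * V = β • 1) (hVU : V * U = -(U * V))
    (hε : ε ≠ 0) (hβ : β ≠ 0) {y w : Fin 2 → M} (hy : y ≠ 0) (hUy : U *ᵥ y = ε • y)
    (hUw : U *ᵥ w = ε • w) : ∃ c : M, w = c • y := by
  have hli := linearIndependent_pair_mulVec hV hVU hε hβ hy hUy
  have hw : w ∈ Submodule.span M (Set.range ![y, V *ᵥ y]) := by
    rw [hli.span_eq_top_of_card_eq_finrank (by simp)]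
    exact Submodule.mem_top
  simp only [Matrix.range_cons, Matrix.range_empty, Set.union_empty, Set.singleton_union] at hw
  obtain ⟨c, e, rfl⟩ := Submodule.mem_span_pair.1 hw
  have h : (2 * ε * e) • V *ᵥ y = 0 := by
    rw [Matrix.mulVec_add, Matrix.mulVec_smul, Matrix.mulVec_smul, hUy,
      mulVec_mulVec_eq_neg_smul hVU hUy] at hUw
    linear_combination (norm := module) -hUw
  have he : 2 * ε * e = 0 := (smul_eq_zero_iff_left (hli.ne_zero 1)).1 h
  have he₀ : e = 0 := (mul_eq_zero.1 he).resolve_left (mul_ne_zero two_ne_zero hε)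
  exact ⟨c, by rw [he₀, zero_smul, add_zero]⟩

/- The connection of `θ` preserves the two eigenlines `y`, `V y` of `U`, so in the basis `y`, `-V y`
the system `w′ = -θ w` has a matrix whose off-diagonal entries come from `a₂ V + a₃ U V` alone. -/
theorem infinite_setOf_isRiccatiSolution_of_anticommute {M : Type*} [Field M] [CharZero M]
    [Differential M] {U V : Matrix (Fin 2) (Fin 2) M} {ε β σ ρ a₁ a₂ a₃ : M}
    (hU : U * U = ε ^ 2 • 1) (hV : V * V = β • 1) (hVU : V * U = -(U * V)) (hε : ε ≠ 0)
    (hβ : β ≠ 0) (hε' : ε′ = σ * ε) {θ : Matrix (Fin 2) (Fin 2) M}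
    (hθ : θ = a₁ • U + a₂ • V + a₃ • (U * V))
    (hU' : U.map (fun x => x′) = σ • U + (U * θ - θ * U))
    (hV' : V.map (fun x => x′) = (2 * ρ) • V + (V * θ - θ * V)) :
    {x : M |
      IsRiccatiSolution ((a₂ + a₃ * ε) * β) (2 * (a₁ * ε + ρ)) (a₂ - a₃ * ε) x}.Infinite := by
  obtain ⟨y, hy, hUy⟩ := exists_mulVec_eq_smul_of_anticommute hU hV hVU hε hβ
  have hUVy := mulVec_mulVec_eq_neg_smul hVU hUy
  have hVVy : V *ᵥ (V *ᵥ y) = β • y := by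
    rw [Matrix.mulVec_mulVec, hV, Matrix.smul_mulVec, Matrix.one_mulVec]
  obtain ⟨l, hl⟩ : ∃ l : M, connection θ y = l • y := by
    refine exists_eq_smul_of_mulVec_eq_smul hV hVU hε hβ hy hUy ?_
    have h := connection_mulVec hU' y
    rw [hUy, connection_smul, hε', smul_smul] at h
    exact (add_left_cancel h).symm
  have hlV : connection θ (V *ᵥ y) = (l + 2 * ρ) • V *ᵥ y := by
    rw [connection_mulVec hV', hl, Matrix.mulVec_smul, ← add_smul, add_comm]
  have hθy : θ *ᵥ y = (a₁ * ε) • y + (a₂ - a₃ * ε) • V *ᵥ y := by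
    simp only [hθ, Matrix.add_mulVec, Matrix.smul_mulVec, ← Matrix.mulVec_mulVec, hUy, hUVy]
    module
  have hθVy : θ *ᵥ (V *ᵥ y) = -(a₁ * ε) • V *ᵥ y + ((a₂ + a₃ * ε) * β) • y := by
    simp only [hθ, Matrix.add_mulVec, Matrix.smul_mulVec, ← Matrix.mulVec_mulVec, hUy, hUVy, hVVy,
      Matrix.mulVec_smul]
    module
  have hli : LinearIndependent M ![y, -V *ᵥ y] :=
    linearIndependent_pair_mulVec (by rwa [neg_mul_neg]) (by rw [neg_mul, mul_neg, hVU]) hε hβ hy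
      hUy
  have hy' (i) : (y i)′ = (l - a₁ * ε) * y i + (a₂ - a₃ * ε) * (-V *ᵥ y) i := by
    have h := congrFun hl i
    simp only [connection, hθy, Pi.add_apply, Pi.smul_apply, smul_eq_mul] at h
    simp only [Matrix.neg_mulVec, Pi.neg_apply]
    linear_combination h
  have hz' (i) : ((-V *ᵥ y) i)′ =
      (a₂ + a₃ * ε) * β * y i + (l + 2 * ρ + a₁ * ε) * (-V *ᵥ y) i := by
    have h := congrFun hlV i
    simp only [connection, hθVy, Pi.add_apply, Pi.smul_apply, smul_eq_mul] at h
    simp only [Matrix.neg_mulVec, Pi.neg_apply, map_neg]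
    linear_combination -h
  convert infinite_setOf_isRiccatiSolution_of_linearIndependent hli hy' hz' using 4
  ring

end AnticommutingMatrices

section Quaternion

theorem DiffSplits.exists_algHom_map {k Q L : Type*} (M : Type*) [Field k] [Ring Q] [Algebra k Q]
    [Field L] [Algebra k L] [Differential L] [Field M] [Algebra k M] [Algebra L M]
    [IsScalarTower k L M] [Differential M] [DifferentialAlgebra L M] {d : Q → Q}
    (h : DiffSplits k Q d L fun x => x′) :
    ∃ ψ : Q →ₐ[k] Matrix (Fin 2) (Fin 2) M, ∀ x, ψ (d x) = (ψ x).map fun y => y′ := by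
  obtain ⟨D, -, hD, φ, hφ⟩ := h
  refine ⟨(IsScalarTower.toAlgHom k L M).mapMatrix.comp
    ((φ.toAlgHom.restrictScalars k).comp Algebra.TensorProduct.includeRight), fun x => ?_⟩
  have hφx : φ (1 ⊗ₜ d x) = (φ (1 ⊗ₜ x)).map fun y => y′ := by
    rw [← hφ, hD]
    beta_reduce
    rw [Derivation.map_one_eq_zero, TensorProduct.zero_tmul, zero_add]
  ext i j
  exact (congrArg (algebraMap L M) (congrFun₂ hφx i j)).trans (deriv_algebraMap _).symm

theorem deriv_eq_deriv_div_mul_of_sq_eq {M : Type*} [Field M] [CharZero M] [Differential M]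
    {x a : M} (ha : a ≠ 0) (hx : x ^ 2 = a) : x′ = a′ / (2 * a) * x := by
  have hx₀ : x ≠ 0 := by
    rintro rfl
    exact ha (by rw [← hx, zero_pow two_ne_zero])
  rw [← hx, Derivation.leibniz_pow]
  simp only [smul_eq_mul, nsmul_eq_mul]
  field_simp
  simp

variable {k M : Type*} [Field k] [CharZero k] [Differential k] [Field M] [Algebra k M]
  [Differential M]

/-- The Riccati equation `X′ = (a₂ + a₃ε)β + 2(a₁ε + β′/(4β)) X - (a₂ - a₃ε) X²` associated with
the derivation `d_{(u,v)} + ∂_ϑ` on the quaternion algebra `(ε², β)`, where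
`ϑ = a₁ u + a₂ v + a₃ u v`. -/
def IsQuaternionRiccatiSolution (β a₁ a₂ a₃ : k) (ε x : M) : Prop :=
  IsRiccatiSolution ((algebraMap k M a₂ + algebraMap k M a₃ * ε) * algebraMap k M β)
    (2 * (algebraMap k M a₁ * ε + algebraMap k M (β′ / (4 * β))))
    (algebraMap k M a₂ - algebraMap k M a₃ * ε) x

variable [DifferentialAlgebra k M] {Q : Type*} [Ring Q] [Algebra k Q]
  {α β a₁ a₂ a₃ : k} {u v ϑ : Q} {d : Q → Q} {ψ : Q →ₐ[k] Matrix (Fin 2) (Fin 2) M}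

theorem infinite_setOf_isQuaternionRiccatiSolution (hα : α ≠ 0) (hβ : β ≠ 0)
    (hu : u * u = algebraMap k Q α) (hv : v * v = algebraMap k Q β) (huv : v * u = -(u * v))
    (hϑ : ϑ = algebraMap k Q a₁ * u + algebraMap k Q a₂ * v + algebraMap k Q a₃ * (u * v))
    (hdu : d u = algebraMap k Q (α′ / (2 * α)) * u + (u * ϑ - ϑ * u))
    (hdv : d v = algebraMap k Q (β′ / (2 * β)) * v + (v * ϑ - ϑ * v))
    (hψ : ∀ x, ψ (d x) = (ψ x).map fun y => y′) {ε : M} (hε : ε ^ 2 = algebraMap k M α) :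
    {x : M | IsQuaternionRiccatiSolution β a₁ a₂ a₃ ε x}.Infinite := by
  have : CharZero M := charZero_of_injective_algebraMap (algebraMap k M).injective
  have hαM : algebraMap k M α ≠ 0 := (_root_.map_ne_zero _).2 hα
  have map_algebraMap_mul (c : k) (x : Q) : ψ (algebraMap k Q c * x) = algebraMap k M c • ψ x := by
    rw [← Algebra.smul_def, map_smul, algebraMap_smul]
  have map_algebraMap (c : k) : ψ (algebraMap k Q c) = algebraMap k M c • 1 := by
    rw [ψ.commutes, algebraMap_smul, Algebra.algebraMap_eq_smul_one]
  have hρ : β′ / (2 * β) = 2 * (β′ / (4 * β)) := by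
    field_simp
    norm_num
  exact infinite_setOf_isRiccatiSolution_of_anticommute (U := ψ u) (V := ψ v) (θ := ψ ϑ)
    (σ := algebraMap k M (α′ / (2 * α)))
    (by rw [← map_mul, hu, map_algebraMap, hε]) (by rw [← map_mul, hv, map_algebraMap])
    (by rw [← map_mul, huv, map_neg, map_mul])
    (by rintro rfl; exact hαM (by rw [← hε, zero_pow two_ne_zero]))
    ((_root_.map_ne_zero _).2 hβ)
    (by
      rw [deriv_eq_deriv_div_mul_of_sq_eq hαM hε, deriv_algebraMap, map_div₀, map_mul, map_ofNat])
    (by simp only [hϑ, map_add, map_algebraMap_mul, map_mul])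
    (by rw [← hψ, hdu]; simp only [map_add, map_algebraMap_mul, map_sub, map_mul])
    (by
      rw [← hψ, hdv, hρ, map_add, map_algebraMap_mul, map_sub, map_mul, map_mul, map_mul,
        map_ofNat])

theorem trdegGE_three_of_infinite_setOf_isQuaternionRiccatiSolution [IsAlgClosed M]
    (hinf : ∀ ε : M, ε ^ 2 = algebraMap k M α →
      {x : M | IsQuaternionRiccatiSolution β a₁ a₂ a₃ ε x}.Infinite)
    (hind : ∀ ε : M, ε ^ 2 = algebraMap k M α → ∀ x y : M,
      IsQuaternionRiccatiSolution β a₁ a₂ a₃ ε x → IsQuaternionRiccatiSolution β a₁ a₂ a₃ ε y →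
        x ≠ y → AlgebraicIndependent k ![x, y]) : TrdegGE k M 3 := by
  classical
  obtain ⟨ε, hε⟩ := IsAlgClosed.exists_pow_nat_eq (algebraMap k M α) two_pos
  have hc : algebraMap k M a₂ - algebraMap k M a₃ * ε ≠ 0 := by
    intro hc
    have hε' : (-ε) ^ 2 = algebraMap k M α := by rw [neg_sq, hε]
    have hzero : IsQuaternionRiccatiSolution β a₁ a₂ a₃ (-ε) 0 := by
      simp [IsQuaternionRiccatiSolution, IsRiccatiSolution, ← sub_eq_add_neg, hc]
    obtain ⟨x, hx, hx₀⟩ := (hinf _ hε').exists_notMem_finset {0}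
    exact (hind _ hε' 0 x hzero hx (by simpa [eq_comm] using hx₀)).transcendental 0
      isAlgebraic_zero
  have algebraic_const (c : k) : IsAlgebraic k (algebraMap k M c) := isAlgebraic_algebraMap c
  have algebraic_ε : IsAlgebraic k ε :=
    .of_pow two_pos (hε ▸ isAlgebraic_algebraMap α)
  obtain ⟨s, hs, hcard⟩ := (hinf ε hε).exists_subset_card_eq 3
  obtain ⟨x₁, x₂, x₃, h₁₂, h₁₃, h₂₃, rfl⟩ := Finset.card_eq_three.1 hcard
  simp only [Finset.coe_insert, Finset.coe_singleton, Set.insert_subset_iff,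
    Set.singleton_subset_iff] at hs
  exact trdegGE_three
    (((algebraic_const a₂).add ((algebraic_const a₃).mul algebraic_ε)).mul (algebraic_const β))
    ((isAlgebraic_natCast 2).mul (((algebraic_const a₁).mul algebraic_ε).add (algebraic_const _)))
    ((algebraic_const a₂).sub ((algebraic_const a₃).mul algebraic_ε)) hc (hind ε hε)
    hs.1 hs.2.1 hs.2.2 h₁₂.symm h₁₃.symm h₂₃.symm

end Quaternion

/-- If the Riccati equation associated to `(Q, d)` has no solution in
the algebraic closure of `k`, and in every differential field extension of `(k(ξ), ′)`
any two distinct solutions are algebraically independent over `k`, then every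
differential splitting field of `(Q, d)` has transcendence degree at least `3` over `k`. -/
theorem stmt_8 (k : Type u) [Field k] [CharZero k]
    (δk : k → k) (hδk : IsRingDeriv δk)
    (α β : k) (hα : α ≠ 0) (hβ : β ≠ 0)
    (Q : Type u) [Ring Q] [Algebra k Q]
    (u v : Q) (hu : u * u = algebraMap k Q α) (hv : v * v = algebraMap k Q β)
    (huv : v * u = -(u * v))
    (bQ : Module.Basis (Fin 4) k Q) (hbQ : ⇑bQ = ![1, u, v, u * v])
    (d : Q → Q) (hd : IsRingDeriv d) (hdk : RestrictsTo δk d)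
    (a₁ a₂ a₃ : k) (ϑ : Q)
    (hϑ : ϑ = algebraMap k Q a₁ * u + algebraMap k Q a₂ * v + algebraMap k Q a₃ * (u * v))
    (hdu : d u = algebraMap k Q (δk α / (2 * α)) * u + (u * ϑ - ϑ * u))
    (hdv : d v = algebraMap k Q (δk β / (2 * β)) * v + (v * ϑ - ϑ * v))
    (kb : Type u) [Field kb] [Algebra k kb] [IsAlgClosure k kb]
    (δkb : kb → kb) (hδkb : IsRingDeriv δkb) (hreskb : RestrictsTo δk δkb)
    (ξ : kb) (hξ : ξ ^ 2 = algebraMap k kb α)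
    (hnosol : ∀ x : kb,
      δkb x ≠ (algebraMap k kb a₂ + algebraMap k kb a₃ * ξ) * algebraMap k kb β
        + 2 * (algebraMap k kb a₁ * ξ + algebraMap k kb (δk β / (4 * β))) * x
        - (algebraMap k kb a₂ - algebraMap k kb a₃ * ξ) * x ^ 2)
    (hindep : ∀ (M : Type u) (_ : Field M) (_ : Algebra k M) (δM : M → M),
      IsRingDeriv δM → RestrictsTo δk δM →
      ∀ ξM : M, ξM ^ 2 = algebraMap k M α →
      ∀ l₁ l₂ : M,
        (δM l₁ = (algebraMap k M a₂ + algebraMap k M a₃ * ξM) * algebraMap k M β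
          + 2 * (algebraMap k M a₁ * ξM + algebraMap k M (δk β / (4 * β))) * l₁
          - (algebraMap k M a₂ - algebraMap k M a₃ * ξM) * l₁ ^ 2) →
        (δM l₂ = (algebraMap k M a₂ + algebraMap k M a₃ * ξM) * algebraMap k M β
          + 2 * (algebraMap k M a₁ * ξM + algebraMap k M (δk β / (4 * β))) * l₂
          - (algebraMap k M a₂ - algebraMap k M a₃ * ξM) * l₂ ^ 2) →
        l₁ ≠ l₂ → AlgebraicIndependent k ![l₁, l₂])
    (L : Type u) [Field L] [Algebra k L]
    (δL : L → L) (hδL : IsRingDeriv δL) (hresL : RestrictsTo δk δL)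
    (hsplit : DiffSplits k Q d L δL) :
    TrdegGE k L 3 := by
  let := hδk.differential
  let := hδL.differential
  have : CharZero L := charZero_of_injective_algebraMap (algebraMap k L).injective
  let M := AlgebraicClosure L
  let := algebraicDifferential L M
  have := differentialAlgebra_algebraicDifferential (F := L) (M := M)
  have : DifferentialAlgebra k L := ⟨hresL⟩
  have : DifferentialAlgebra k M := differentialAlgebra_trans k L M
  obtain ⟨ψ, hψ⟩ := DiffSplits.exists_algHom_map M hsplit
  have hM : TrdegGE k M 3 := trdegGE_three_of_infinite_setOf_isQuaternionRiccatiSolution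
    (fun ε hε => infinite_setOf_isQuaternionRiccatiSolution hα hβ hu hv huv hϑ hdu hdv hψ hε)
    (hindep M _ _ _ (isRingDeriv_deriv M) deriv_algebraMap)
  exact hM.of_isAlgebraic
end

section
/- Let k = ℚ(t) with the derivation t′ = 1, let λ be transcendental over k, and let K = k(λ) carry the derivation extending that of k with λ′ = λ² − t. Then for every nonzero rational constant c ∈ ℚˣ, the equation Y′ = −2λY + c has no solution in K. -/
open scoped TensorProduct

/-!
A rational solution of `Y′ = -2λY + c` has a denominator `Q ∈ k[λ]` dividing its own derivative, and
a polynomial solution is impossible because `λ^n` contributes `(n + 2)λ^(n+1)` to `Y′ + 2λY`. So it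
suffices that no nonconstant `Q` divides `Q′`. By Gauss's lemma `Q` may be taken in `ℚ[t][λ]`, and
then `Q′ = (dλ + b)Q` with `d = deg Q` and `b ∈ ℚ[t]`. Reading off the coefficients of `Q` from the
top, after `t ↦ -t` and a change of alternate signs, gives a sequence of polynomials satisfying
`(j + 1) w_{j+2} = w_{j+1}′ + b w_{j+1} + (d + 1 - j) t w_j`, and the theorem reduces to the fact
that this sequence cannot end. If `b` has nonnegative leading coefficient, so do all the `w_j`, and
nothing can cancel; if it has negative leading coefficient, the signs alternate strictly.
-/

open Polynomial Differential

lemma derivative_neg_one_pow_mul {R : Type*} [CommRing R] (p : R[X]) (n : ℕ) :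
    derivative ((-1) ^ n * p) = (-1) ^ n * derivative p := by
  simp [derivative_mul, derivative_pow]

section LeadingCoeff

variable {R : Type*} [CommRing R] [LinearOrder R] [IsStrictOrderedRing R] {p q : R[X]}

lemma degree_add_of_leadingCoeff_nonneg (hp : 0 ≤ p.leadingCoeff) (hq : 0 ≤ q.leadingCoeff) :
    (p + q).degree = max p.degree q.degree := by
  by_cases h : p.leadingCoeff + q.leadingCoeff = 0
  · obtain ⟨hp0, hq0⟩ := (add_eq_zero_iff_of_nonneg hp hq).1 h
    simp [leadingCoeff_eq_zero.1 hp0, leadingCoeff_eq_zero.1 hq0]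
  · exact degree_add_eq_of_leadingCoeff_add_ne_zero h

lemma leadingCoeff_add_nonneg (hp : 0 ≤ p.leadingCoeff) (hq : 0 ≤ q.leadingCoeff) :
    0 ≤ (p + q).leadingCoeff := by
  rcases lt_trichotomy p.degree q.degree with h | h | h
  · rwa [leadingCoeff_add_of_degree_lt h]
  · by_cases h0 : p.leadingCoeff + q.leadingCoeff = 0
    · obtain ⟨hp0, hq0⟩ := (add_eq_zero_iff_of_nonneg hp hq).1 h0
      simp [leadingCoeff_eq_zero.1 hp0, leadingCoeff_eq_zero.1 hq0]
    · rw [leadingCoeff_add_of_degree_eq h h0]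
      exact add_nonneg hp hq
  · rwa [leadingCoeff_add_of_degree_lt' h]

lemma leadingCoeff_add_pos (hp : 0 ≤ p.leadingCoeff) (hq : 0 < q.leadingCoeff) :
    0 < (p + q).leadingCoeff := by
  refine (leadingCoeff_add_nonneg hp hq.le).lt_of_ne' ?_
  rw [leadingCoeff_ne_zero, ← degree_ne_bot, degree_add_of_leadingCoeff_nonneg hp hq.le]
  have hq0 : q ≠ 0 := leadingCoeff_ne_zero.1 hq.ne'
  simp [hq0]

lemma leadingCoeff_derivative_nonneg (hp : 0 ≤ p.leadingCoeff) :
    0 ≤ (derivative p).leadingCoeff := by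
  rw [leadingCoeff_derivative]
  positivity

lemma leadingCoeff_derivative_add_mul_nonneg (hq : 0 ≤ q.leadingCoeff) (hp : 0 ≤ p.leadingCoeff) :
    0 ≤ (derivative p + q * p).leadingCoeff := by
  refine leadingCoeff_add_nonneg (leadingCoeff_derivative_nonneg hp) ?_
  rw [leadingCoeff_mul]
  positivity

lemma leadingCoeff_derivative_mul_X_pos (hp : 0 < p.leadingCoeff) :
    0 < (derivative (p * X)).leadingCoeff := by
  rw [derivative_mul, derivative_X, mul_one]
  refine leadingCoeff_add_pos ?_ hp
  rw [leadingCoeff_mul_X]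
  exact leadingCoeff_derivative_nonneg hp.le

lemma leadingCoeff_C_mul_nonneg_iff {c : R} (hc : 0 < c) :
    0 ≤ (C c * p).leadingCoeff ↔ 0 ≤ p.leadingCoeff := by
  rw [leadingCoeff_mul, leadingCoeff_C, mul_nonneg_iff_of_pos_left hc]

lemma leadingCoeff_C_mul_pos_iff {c : R} (hc : 0 < c) :
    0 < (C c * p).leadingCoeff ↔ 0 < p.leadingCoeff := by
  rw [leadingCoeff_mul, leadingCoeff_C, mul_pos_iff_of_pos_left hc]

lemma leadingCoeff_mul_sub_derivative_pos (hq : 0 < q.leadingCoeff) (hp : 0 < p.leadingCoeff) :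
    0 < (q * p - derivative p).leadingCoeff := by
  have hp0 : p ≠ 0 := leadingCoeff_ne_zero.1 hp.ne'
  have hq0 : q ≠ 0 := leadingCoeff_ne_zero.1 hq.ne'
  have hdeg : (derivative p).degree < (q * p).degree :=
    (degree_derivative_lt hp0).trans_le (mul_comm p q ▸ degree_le_mul_left p hq0)
  rw [leadingCoeff_sub_of_degree_lt hdeg, leadingCoeff_mul]
  positivity

end LeadingCoeff

/-- The recurrence satisfied, up to signs and `X ↦ -X`, by the coefficients, listed from the leading
one downwards, of a polynomial of degree `d` in `λ` dividing its own derivative when `λ′ = λ² - X`;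
`b` comes from the constant term of the cofactor. With `λ = -u′/u` that equation is Airy's
`u″ = X u`. The list is padded by `w 0 = 0`, so that it starts at `w 1`, and `w (d + 2) = 0` says
that it ends with the constant coefficient `w (d + 1)`. -/
structure IsAiryChain {R : Type*} [CommRing R] (b : R[X]) (d : ℕ) (w : ℕ → R[X]) : Prop where
  zero : w 0 = 0
  step : ∀ j ≤ d, C ((j : R) + 1) * w (j + 2) =
    derivative (w (j + 1)) + b * w (j + 1) + C ((d : R) + 1 - j) * (w j * X)

namespace IsAiryChain

variable {R : Type*} [CommRing R] {b : R[X]} {d : ℕ} {w : ℕ → R[X]}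

lemma neg (h : IsAiryChain b d w) : IsAiryChain b d (-w) where
  zero := by simp [h.zero]
  step j hj := by
    simp only [Pi.neg_apply, derivative_neg]
    linear_combination -h.step j hj

variable [LinearOrder R] [IsStrictOrderedRing R]

lemma leadingCoeff_nonneg (h : IsAiryChain b d w) (hb : 0 ≤ b.leadingCoeff)
    (h1 : 0 ≤ (w 1).leadingCoeff) : ∀ j ≤ d + 2, 0 ≤ (w j).leadingCoeff
  | 0, _ => by simp [h.zero]
  | 1, _ => h1
  | j + 2, hj => by
    have hw := h.leadingCoeff_nonneg hb h1 j (by lia)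
    have hw' := h.leadingCoeff_nonneg hb h1 (j + 1) (by lia)
    have hjd : (j : R) ≤ d := by exact_mod_cast (by lia : j ≤ d)
    rw [← leadingCoeff_C_mul_nonneg_iff (by positivity : 0 < (j : R) + 1), h.step j (by lia)]
    refine leadingCoeff_add_nonneg (leadingCoeff_derivative_add_mul_nonneg hb hw') ?_
    rwa [leadingCoeff_C_mul_nonneg_iff (by linarith), leadingCoeff_mul_X]

lemma leadingCoeff_add_two_pos (h : IsAiryChain b d w) (hb : 0 ≤ b.leadingCoeff) {j : ℕ}
    (hjd : j ≤ d) (hj : 0 < (w j).leadingCoeff) (hj' : 0 ≤ (w (j + 1)).leadingCoeff) :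
    0 < (w (j + 2)).leadingCoeff := by
  have hjd' : (j : R) ≤ d := by exact_mod_cast hjd
  rw [← leadingCoeff_C_mul_pos_iff (by positivity : 0 < (j : R) + 1), h.step j hjd]
  refine leadingCoeff_add_pos (leadingCoeff_derivative_add_mul_nonneg hb hj') ?_
  rwa [leadingCoeff_C_mul_pos_iff (by linarith), leadingCoeff_mul_X]

lemma leadingCoeff_derivative_add_two_pos (h : IsAiryChain b d w) (hb : 0 ≤ b.leadingCoeff) {j : ℕ}
    (hjd : j ≤ d) (hj : 0 < (w j).leadingCoeff) (hj' : 0 ≤ (w (j + 1)).leadingCoeff) :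
    0 < (derivative (w (j + 2))).leadingCoeff := by
  have hjd' : (j : R) ≤ d := by exact_mod_cast hjd
  rw [← leadingCoeff_C_mul_pos_iff (by positivity : 0 < (j : R) + 1), ← derivative_C_mul,
    h.step j hjd, derivative_add, derivative_C_mul]
  refine leadingCoeff_add_pos (leadingCoeff_derivative_nonneg <|
    leadingCoeff_derivative_add_mul_nonneg hb hj') ?_
  rw [leadingCoeff_C_mul_pos_iff (by linarith)]
  exact leadingCoeff_derivative_mul_X_pos hj

lemma leadingCoeff_add_three_pos (h : IsAiryChain b d w) (hb : 0 ≤ b.leadingCoeff) {j : ℕ}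
    (hjd : j + 1 ≤ d) (hj : 0 < (w j).leadingCoeff) (hj' : 0 ≤ (w (j + 1)).leadingCoeff) :
    0 < (w (j + 3)).leadingCoeff := by
  have hpos := h.leadingCoeff_add_two_pos hb (by lia) hj hj'
  have hpos' := h.leadingCoeff_derivative_add_two_pos hb (by lia) hj hj'
  have hjd' : ((j + 1 : ℕ) : R) ≤ d := by exact_mod_cast hjd
  rw [← leadingCoeff_C_mul_pos_iff (by positivity : 0 < ((j + 1 : ℕ) : R) + 1), h.step (j + 1) hjd,
    add_assoc, add_comm (derivative _)]
  refine leadingCoeff_add_pos (leadingCoeff_add_nonneg ?_ ?_) hpos'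
  · rw [leadingCoeff_mul]
    positivity
  · rwa [leadingCoeff_C_mul_nonneg_iff (by linarith), leadingCoeff_mul_X]

lemma leadingCoeff_pos_of_three_le (h : IsAiryChain b d w) (hb : 0 ≤ b.leadingCoeff)
    (h1 : 0 < (w 1).leadingCoeff) : ∀ j, 3 ≤ j → j ≤ d + 2 → 0 < (w j).leadingCoeff
  | 3, _, hj =>
    h.leadingCoeff_add_two_pos hb (by lia) h1 (h.leadingCoeff_nonneg hb h1.le _ (by lia))
  | 4, _, hj =>
    h.leadingCoeff_add_three_pos hb (by lia) h1 (h.leadingCoeff_nonneg hb h1.le _ (by lia))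
  | j + 5, _, hj => h.leadingCoeff_add_two_pos hb (by lia)
      (h.leadingCoeff_pos_of_three_le hb h1 (j + 3) (by lia) (by lia))
      (h.leadingCoeff_nonneg hb h1.le _ (by lia))

lemma leadingCoeff_neg_one_pow_mul_pos (h : IsAiryChain b d w) (hb : b.leadingCoeff < 0)
    (h1 : 0 < (w 1).leadingCoeff) :
    ∀ j ≤ d + 1, 0 < ((-1) ^ j * w (j + 1)).leadingCoeff
  | 0, _ => by simpa using h1
  | j + 1, hj => by
    have hw' := h.leadingCoeff_neg_one_pow_mul_pos hb h1 j (by lia)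
    have hw : 0 ≤ ((-1) ^ (j + 1) * w j).leadingCoeff := by
      match j, hj with
      | 0, _ => simp [h.zero]
      | i + 1, _ =>
        simpa [pow_succ] using (h.leadingCoeff_neg_one_pow_mul_pos hb h1 i (by lia)).le
    have hjd : (j : R) ≤ d := by exact_mod_cast (by lia : j ≤ d)
    have hstep : C ((j : R) + 1) * ((-1) ^ (j + 1) * w (j + 2)) =
        C ((d : R) + 1 - j) * ((-1) ^ (j + 1) * w j * X) +
          (-b * ((-1) ^ j * w (j + 1)) - derivative ((-1) ^ j * w (j + 1))) := by
      rw [derivative_neg_one_pow_mul]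
      linear_combination (-1) ^ (j + 1) * h.step j (by lia)
    rw [← leadingCoeff_C_mul_pos_iff (by positivity : 0 < (j : R) + 1), hstep]
    refine leadingCoeff_add_pos ?_ (leadingCoeff_mul_sub_derivative_pos (by simpa using hb) hw')
    rwa [leadingCoeff_C_mul_nonneg_iff (by linarith), leadingCoeff_mul_X]

theorem degree_eq_zero_of_leadingCoeff_pos (h : IsAiryChain b d w) (h1 : 0 < (w 1).leadingCoeff)
    (hend : w (d + 2) = 0) : d = 0 := by
  rcases le_or_gt 0 b.leadingCoeff with hb | hb
  · by_contra hd
    simpa [hend] using h.leadingCoeff_pos_of_three_le hb h1 (d + 2) (by lia) le_rfl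
  · simpa [hend] using h.leadingCoeff_neg_one_pow_mul_pos hb h1 (d + 1) le_rfl

theorem degree_eq_zero (h : IsAiryChain b d w) (h1 : w 1 ≠ 0) (hend : w (d + 2) = 0) : d = 0 := by
  rcases (leadingCoeff_ne_zero.2 h1).lt_or_gt with hneg | hpos
  · exact h.neg.degree_eq_zero_of_leadingCoeff_pos (by simpa using hneg) (by simpa using hend)
  · exact h.degree_eq_zero_of_leadingCoeff_pos hpos hend

end IsAiryChain

lemma dvd_derivation_apply_iff_of_associated {A : Type*} [CommRing A] (D : Derivation ℤ A A)
    {p q : A} (h : Associated p q) : p ∣ D p ↔ q ∣ D q := by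
  obtain ⟨u, rfl⟩ := h
  rw [u.isUnit.mul_right_dvd, D.leibniz, smul_eq_mul, smul_eq_mul,
    dvd_add_right (dvd_mul_right p _), u.isUnit.dvd_mul_left]

lemma exists_isPrimitive_associated_map {A k : Type*} [CommRing A] [IsDomain A] [IsGCDMonoid A]
    [Field k] [Algebra A k] [IsFractionRing A k] {Q : k[X]} (hQ : Q ≠ 0) :
    ∃ P : A[X], P.IsPrimitive ∧ Associated (P.map (algebraMap A k)) Q := by
  let : NormalizedGCDMonoid A := Nonempty.some inferInstance
  obtain ⟨a, ha, hmap⟩ := IsLocalization.integerNormalization_spec (nonZeroDivisors A) Q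
  set N := IsLocalization.integerNormalization (nonZeroDivisors A) Q
  have hC {r : A} (hr : r ≠ 0) : IsUnit (C (algebraMap A k r)) := by simpa using hr
  have hsmul : C (algebraMap A k a) * Q =
      C (algebraMap A k N.content) * N.primPart.map (algebraMap A k) := by
    rw [← map_C (a := N.content), ← Polynomial.map_mul, ← N.eq_C_content_mul_primPart, hmap,
      ← algebraMap_smul k a Q, smul_eq_C_mul]
  have hcontent : N.content ≠ 0 := by
    rw [Ne, content_eq_zero_iff, IsFractionRing.integerNormalization_eq_zero_iff]
    exact hQ
  exact ⟨N.primPart, N.isPrimitive_primPart,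
    (associated_unit_mul_left _ _ (hC hcontent)).symm.trans <|
      hsmul ▸ associated_unit_mul_left _ _ (hC (nonZeroDivisors.ne_zero ha))⟩

lemma den_dvd_deriv_den {A K : Type*} [CommRing A] [IsDomain A] [UniqueFactorizationMonoid A]
    [Field K] [Algebra A K] [IsFractionRing A K] [Differential A] [Differential K]
    [DifferentialAlgebra A K] {α β : A} {y : K}
    (h : y′ = algebraMap A K α * y + algebraMap A K β) :
    (IsFractionRing.den A y : A) ∣ (IsFractionRing.den A y : A)′ := by
  have hmul : y * algebraMap A K (IsFractionRing.den A y : A) =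
      algebraMap A K (IsFractionRing.num A y) := by
    rw [mul_comm]
    simpa using IsLocalization.mk'_spec' K (IsFractionRing.num A y) (IsFractionRing.den A y)
  have hrel := IsFractionRing.num_den_reduced A y
  generalize (IsFractionRing.den A y : A) = D at *
  generalize IsFractionRing.num A y = N at *
  have hderiv : N * D′ = D * (N′ - α * N - β * D) := by
    apply IsFractionRing.injective A K
    simp only [map_mul, map_sub, ← deriv_algebraMap, ← hmul]
    simp only [h, Derivation.leibniz, smul_eq_mul]
    ring
  exact hrel.symm.dvd_of_dvd_mul_left ⟨_, hderiv⟩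

lemma isFractionRing_aeval {k K : Type*} [Field k] [Field K] [Algebra k K] {x : K}
    (htrans : Transcendental k x) (hgen : IntermediateField.adjoin k {x} = ⊤) :
    letI := (aeval (R := k) x).toAlgebra
    IsFractionRing k[X] K := by
  let := (aeval (R := k) x).toAlgebra
  have : FaithfulSMul k[X] K :=
    (faithfulSMul_iff_algebraMap_injective _ _).2 (transcendental_iff_injective.1 htrans)
  refine IsFractionRing.of_field _ _ fun z => ?_
  exact (IntermediateField.mem_adjoin_simple_iff k z).1 (hgen ▸ IntermediateField.mem_top)

namespace IsRingDeriv

variable {A : Type*} [CommRing A] {d : A → A}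

/-- An `IsRingDeriv` on a commutative ring as a bundled `Derivation`. -/
def toDerivation (hd : IsRingDeriv d) : Derivation ℤ A A :=
  Derivation.mk' (AddMonoidHom.mk' d hd.map_add).toIntLinearMap fun x y => by
    simp [hd.leibniz, add_comm, mul_comm]

/-- The differential ring structure given by an `IsRingDeriv`. -/
abbrev toDifferential (hd : IsRingDeriv d) : Differential A :=
  ⟨hd.toDerivation⟩

lemma apply_ratCast {k : Type*} [Field k] [CharZero k] {d : k → k} (hd : IsRingDeriv d) (q : ℚ) :
    d q = 0 := by
  have hone : d 1 = 0 := hd.toDerivation.map_one_eq_zero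
  have hsmul : d (q • 1) = q • d 1 := map_rat_smul hd.toDerivation q 1
  rwa [hone, smul_zero, Rat.smul_one_eq_cast] at hsmul

lemma apply_algebraMap_polynomial {R B : Type*} [CommRing R] [CommRing B] [Algebra R[X] B]
    {d : B → B} (hd : IsRingDeriv d) (hC : ∀ r, d (algebraMap R[X] B (C r)) = 0)
    (hX : d (algebraMap R[X] B X) = 1) (p : R[X]) :
    d (algebraMap R[X] B p) = algebraMap R[X] B (derivative p) := by
  induction p using Polynomial.induction_on' with
  | add p q hp hq => simp only [_root_.map_add, hd.map_add, hp, hq]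
  | monomial n r =>
    have hpow : d (algebraMap R[X] B X ^ n) =
        n • algebraMap R[X] B X ^ (n - 1) • d (algebraMap R[X] B X) :=
      hd.toDerivation.leibniz_pow _ n
    rw [← C_mul_X_pow_eq_monomial, map_mul, map_pow, hd.leibniz, hC, hpow, hX]
    simp [derivative_X_pow]

end IsRingDeriv

section Riccati

variable {A : Type*} [CommRing A] [Differential A] (a : A)

/-- The derivation of `A[λ]` that extends the derivation of `A` by `λ′ = λ² - a`, where `λ` is the
polynomial variable. -/
noncomputable def riccatiDeriv : Derivation ℤ A[X] A[X] :=
  Differential.implicitDeriv (X ^ 2 - C a)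

lemma coeff_riccatiDeriv (Q : A[X]) (i : ℕ) :
    (riccatiDeriv a Q).coeff i =
      (Q.coeff i)′ + ((i : A) - 1) * (X * Q).coeff i - (i + 1) * a * Q.coeff (i + 1) := by
  have hvar : (riccatiDeriv a Q).coeff i =
      (Q.coeff i)′ + (X * (X * derivative Q)).coeff i - a * (derivative Q).coeff i := by
    simp [riccatiDeriv, Differential.implicitDeriv, sub_mul, pow_two, mul_assoc, add_sub_assoc]
  rw [hvar, coeff_derivative]
  rcases i with _ | _ | i
  · simp
  · simp only [coeff_X_mul, mul_coeff_zero, coeff_X_zero]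
    push_cast
    ring
  · simp only [coeff_X_mul, coeff_derivative]
    push_cast
    ring

lemma riccatiDeriv_map {B : Type*} [CommRing B] [Differential B] [Algebra A B]
    [DifferentialAlgebra A B] (Q : A[X]) :
    riccatiDeriv (algebraMap A B a) (Q.map (algebraMap A B)) =
      (riccatiDeriv a Q).map (algebraMap A B) := by
  have hX : X * Q.map (algebraMap A B) = (X * Q).map (algebraMap A B) := by simp
  ext i
  simp only [coeff_riccatiDeriv, hX, coeff_map, deriv_algebraMap, map_sub, map_add, map_mul,
    map_natCast, map_one]

lemma deriv_aeval_eq_aeval_riccatiDeriv {B : Type*} [CommRing B] [Differential B] [Algebra A B]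
    [DifferentialAlgebra A B] {x : B} (hx : x′ = x ^ 2 - algebraMap A B a) (Q : A[X]) :
    (aeval x Q)′ = aeval x (riccatiDeriv a Q) :=
  Differential.deriv_aeval_eq_implicitDeriv x _ (by simpa using hx) Q

variable {a}

lemma natDegree_riccatiDeriv_le (Q : A[X]) : (riccatiDeriv a Q).natDegree ≤ Q.natDegree + 1 := by
  rw [natDegree_le_iff_coeff_eq_zero]
  intro i hi
  obtain ⟨i, rfl⟩ := Nat.exists_eq_add_of_lt hi
  have hvanish : ∀ j, Q.natDegree < j → Q.coeff j = 0 := fun j => coeff_eq_zero_of_natDegree_lt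
  rw [coeff_riccatiDeriv, coeff_X_mul, hvanish _ (by lia), hvanish _ (by lia), hvanish _ (by lia)]
  simp

lemma coeff_riccatiDeriv_natDegree_add_one (Q : A[X]) :
    (riccatiDeriv a Q).coeff (Q.natDegree + 1) = Q.natDegree * Q.leadingCoeff := by
  have hvanish : Q.coeff (Q.natDegree + 1 + 1) = 0 := coeff_eq_zero_of_natDegree_lt (by lia)
  simp [coeff_riccatiDeriv, hvanish]

lemma exists_eq_C_mul_X_add_C_of_riccatiDeriv_eq_mul [IsDomain A] {Q L : A[X]} (hQ : Q ≠ 0)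
    (h : riccatiDeriv a Q = Q * L) : ∃ b, L = C (Q.natDegree : A) * X + C b := by
  have hL : L.natDegree ≤ 1 := by
    rcases eq_or_ne L 0 with rfl | hL
    · simp
    · have := h ▸ natDegree_riccatiDeriv_le Q
      rwa [natDegree_mul hQ hL, add_le_add_iff_left] at this
  have htop : L.coeff 1 = Q.natDegree := by
    have := coeff_riccatiDeriv_natDegree_add_one (a := a) Q
    rw [h, coeff_mul_add_eq_of_natDegree_le le_rfl hL, coeff_natDegree, mul_comm] at this
    exact mul_right_cancel₀ (leadingCoeff_ne_zero.2 hQ) this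
  exact ⟨L.coeff 0, htop ▸ eq_X_add_C_of_natDegree_le_one hL⟩

lemma coeff_recurrence_of_riccatiDeriv_eq_mul {Q : A[X]} {n b : A}
    (h : riccatiDeriv a Q = Q * (C n * X + C b)) (i : ℕ) :
    (n + 1 - i) * (X * Q).coeff i =
      (Q.coeff i)′ - b * Q.coeff i - (i + 1) * a * Q.coeff (i + 1) := by
  have hcofactor : Q * (C n * X + C b) = C n * (X * Q) + C b * Q := by ring
  have hcoeff := congrArg (coeff · i) (h.trans hcofactor)
  simp only [coeff_riccatiDeriv, coeff_add, coeff_C_mul] at hcoeff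
  linear_combination -hcoeff

lemma eq_zero_of_riccatiDeriv_eq [IsDomain A] [CharZero A] {p : A[X]} {c : A}
    (h : riccatiDeriv a p = C (-2) * X * p + C c) : c = 0 := by
  have hp : p = 0 := by
    have hlead : (p.natDegree : A) * p.leadingCoeff = -2 * p.leadingCoeff := by
      rw [← coeff_riccatiDeriv_natDegree_add_one (a := a) p, h]
      simp [-map_neg, mul_assoc]
    have hzero : ((p.natDegree + 2 : ℕ) : A) * p.leadingCoeff = 0 := by
      push_cast
      linear_combination hlead
    simpa [← Nat.cast_two (R := A), ← Nat.cast_add] using hzero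
  simpa [hp] using h.symm

end Riccati

section PolynomialCoefficients

variable {R : Type*} [CommRing R]

/-- `R[X]` as a differential ring, with the derivation `d/dX`. -/
noncomputable abbrev polynomialDifferential : Differential R[X] :=
  ⟨derivative'.restrictScalars ℤ⟩

attribute [local instance] polynomialDifferential

/-- The coefficients of `X * Q` from the leading one downwards, signed and with `X ↦ -X`. -/
noncomputable def signedCoeff (Q : R[X][X]) (j : ℕ) : R[X] :=
  (-1) ^ j * ((X * Q).coeff (Q.natDegree + 2 - j)).comp (-X)

lemma isAiryChain_signedCoeff {Q : R[X][X]} {b : R[X]}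
    (h : riccatiDeriv X Q = Q * (C (Q.natDegree : R[X]) * X + C b)) :
    IsAiryChain (b.comp (-X)) Q.natDegree (signedCoeff Q) where
  zero := by simp [signedCoeff]
  step j hj := by
    obtain ⟨i, hi⟩ := Nat.exists_eq_add_of_le hj
    have hrec : ((Q.natDegree : R[X]) + 1 - (i : R[X])) * (X * Q).coeff i =
        derivative (Q.coeff i) - b * Q.coeff i - ((i : R[X]) + 1) * X * Q.coeff (i + 1) :=
      coeff_recurrence_of_riccatiDeriv_eq_mul h i
    have hcomp := congrArg (comp · (-X)) hrec
    have hi₀ : Q.natDegree + 2 - (j + 2) = i := by lia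
    have hi₁ : Q.natDegree + 2 - (j + 1) = i + 1 := by lia
    have hi₂ : Q.natDegree + 2 - j = i + 1 + 1 := by lia
    have hcast : (Q.natDegree : R[X]) = j + i := by simp [hi]
    simp only [hcast, sub_comp, add_comp, mul_comp, natCast_comp, one_comp, X_comp] at hcomp
    simp only [signedCoeff, hi₀, hi₁, hi₂, coeff_X_mul, derivative_neg_one_pow_mul, derivative_comp]
    simp only [hcast, map_sub, map_add, map_natCast, map_one, derivative_neg, derivative_X]
    linear_combination (-1) ^ j * hcomp

theorem natDegree_eq_zero_of_dvd_riccatiDeriv [LinearOrder R] [IsStrictOrderedRing R] {Q : R[X][X]}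
    (hQ : Q ≠ 0) (h : Q ∣ riccatiDeriv X Q) : Q.natDegree = 0 := by
  obtain ⟨L, hL⟩ := h
  obtain ⟨b, rfl⟩ := exists_eq_C_mul_X_add_C_of_riccatiDeriv_eq_mul hQ hL
  refine (isAiryChain_signedCoeff hL).degree_eq_zero ?_ ?_
  · simpa [signedCoeff] using hQ
  · simp [signedCoeff]

theorem isUnit_of_dvd_riccatiDeriv [LinearOrder R] [IsStrictOrderedRing R] [IsGCDMonoid R[X]]
    {k : Type*} [Field k] [Algebra R[X] k] [IsFractionRing R[X] k] [Differential k]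
    [DifferentialAlgebra R[X] k] {Q : k[X]} (hQ : Q ≠ 0)
    (h : Q ∣ riccatiDeriv (algebraMap R[X] k X) Q) : IsUnit Q := by
  obtain ⟨P, hP, hPQ⟩ := exists_isPrimitive_associated_map (A := R[X]) hQ
  have hdvd : P ∣ riccatiDeriv X P := by
    refine hP.dvd_of_fraction_map_dvd_fraction_map (K := k) ?_
    rw [← riccatiDeriv_map]
    exact (dvd_derivation_apply_iff_of_associated _ hPQ).2 h
  have hdeg := natDegree_eq_zero_of_dvd_riccatiDeriv hP.ne_zero hdvd
  have hne : P.map (algebraMap R[X] k) ≠ 0 := hPQ.ne_zero_iff.2 hQ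
  rw [← hPQ.isUnit_iff]
  rw [eq_C_of_natDegree_eq_zero hdeg] at hne ⊢
  simpa using hne

theorem deriv_ne_neg_two_mul_add_of_riccati [LinearOrder R] [IsStrictOrderedRing R]
    [IsGCDMonoid R[X]]
    {k : Type*} [Field k] [Algebra R[X] k] [IsFractionRing R[X] k] [Differential k]
    [DifferentialAlgebra R[X] k] {K : Type*} [Field K] [Differential K] [Algebra k K]
    [DifferentialAlgebra k K] {x : K} (htrans : Transcendental k x)
    (hgen : IntermediateField.adjoin k {x} = ⊤)
    (hx : x′ = x ^ 2 - algebraMap k K (algebraMap R[X] k X)) {c : k} (hc : c ≠ 0) (y : K) :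
    y′ ≠ -2 * x * y + algebraMap k K c := by
  intro hy
  have : CharZero k := charZero_of_injective_algebraMap (IsFractionRing.injective R[X] k)
  let : Algebra k[X] K := (aeval x).toAlgebra
  have : IsFractionRing k[X] K := isFractionRing_aeval htrans hgen
  let : Differential k[X] := ⟨riccatiDeriv (algebraMap R[X] k X)⟩
  have : DifferentialAlgebra k[X] K := ⟨deriv_aeval_eq_aeval_riccatiDeriv _ hx⟩
  have hy' : y′ = algebraMap k[X] K (C (-2) * X) * y + algebraMap k[X] K (C c) := by
    simp [hy, RingHom.algebraMap_toAlgebra, (map_ofNat (algebraMap k K) 2).symm]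
  have hden : IsUnit (IsFractionRing.den k[X] y : k[X]) :=
    isUnit_of_dvd_riccatiDeriv (nonZeroDivisors.coe_ne_zero _) (den_dvd_deriv_den hy')
  obtain ⟨p, rfl⟩ := IsFractionRing.isInteger_of_isUnit_den hden
  have hp : p′ = C (-2) * X * p + C c := by
    apply IsFractionRing.injective k[X] K
    rw [← deriv_algebraMap, hy', map_add, map_mul _ _ p]
  exact hc (eq_zero_of_riccatiDeriv_eq hp)

theorem stmt_9_general [LinearOrder R] [IsStrictOrderedRing R] [IsGCDMonoid R[X]]
    (δk : RatFunc R → RatFunc R) (hδk : IsRingDeriv δk) (hC : ∀ r, δk (RatFunc.C r) = 0)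
    (hX : δk RatFunc.X = 1) (K : Type*) [Field K] [Algebra (RatFunc R) K]
    (lam : K) (htrans : Transcendental (RatFunc R) lam)
    (hgen : IntermediateField.adjoin (RatFunc R) {lam} = ⊤)
    (δK : K → K) (hδK : IsRingDeriv δK) (hres : RestrictsTo δk δK)
    (hlam : δK lam = lam ^ 2 - algebraMap (RatFunc R) K RatFunc.X)
    (c : RatFunc R) (hc : c ≠ 0) (y : K) :
    δK y ≠ -2 * lam * y + algebraMap (RatFunc R) K c := by
  let := hδk.toDifferential
  let := hδK.toDifferential
  have : DifferentialAlgebra R[X] (RatFunc R) :=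
    ⟨hδk.apply_algebraMap_polynomial (by simpa using hC) (by simpa using hX)⟩
  have : DifferentialAlgebra (RatFunc R) K := ⟨hres⟩
  refine deriv_ne_neg_two_mul_add_of_riccati (R := R) htrans hgen ?_ hc y
  rw [RatFunc.algebraMap_X]
  exact hlam

end PolynomialCoefficients

/-- Let `k = ℚ(t)` with `t′ = 1` and let `K = k(λ)` with `λ`
transcendental over `k` and `λ′ = λ² − t`. Then for every nonzero rational constant
`c`, the equation `Y′ = −2λY + c` has no solution in `K`. -/
theorem stmt_9
    (δk : RatFunc ℚ → RatFunc ℚ) (hδk : IsRingDeriv δk) (hX : δk RatFunc.X = 1)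
    (K : Type*) [Field K] [Algebra (RatFunc ℚ) K]
    (lam : K) (htrans : Transcendental (RatFunc ℚ) lam)
    (hgen : IntermediateField.adjoin (RatFunc ℚ) {lam} = ⊤)
    (δK : K → K) (hδK : IsRingDeriv δK) (hres : RestrictsTo δk δK)
    (hlam : δK lam = lam ^ 2 - algebraMap (RatFunc ℚ) K RatFunc.X)
    (c : ℚ) (hc : c ≠ 0) (y : K) :
    δK y ≠ -2 * lam * y + algebraMap (RatFunc ℚ) K (RatFunc.C c) := by
  refine stmt_9_general δk hδk (fun r => ?_) hX K lam htrans hgen δK hδK hres hlam _ (by simpa) y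
  rw [eq_ratCast RatFunc.C r, hδk.apply_ratCast]
end

section
/- Let k = ℚ(t) with the derivation t′ = 1, let λ be transcendental over k, and let K = k(λ) carry the derivation extending that of k with λ′ = λ² − t. Then λ is the unique solution of X′ = X² − t in the algebraic closure of K (equipped with the unique extension of the derivation): every σ algebraic over K with σ′ = σ² − t equals λ. -/
open scoped TensorProduct

/-!
If `σ ≠ λ` is a second solution, then `u = (σ - λ)⁻¹` satisfies the linear equation
`u' = -2 λ u - 1`, and so does the mean of the conjugates of `u`, which lies in `K`. Write that mean
as `p / q` with `p, q ∈ ℚ[t][λ]` relatively prime and let `D = ∂_t + (λ² - t) ∂_λ`. Clearing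
denominators shows that `q` divides `D q`.

Give `λ` weight one and `t` weight two and put `t = r²`, `λ = x r`. In `D q = g q`, comparison of
weights makes the cofactor `g` linear in `λ`, and the leading weighted coefficients of `q` satisfy
differential equations in `x` in which nonzero residues at `x = ±1` are obstructions to a polynomial
solution; they force `g = 0`. So `D q = 0`, hence `q` is free of `λ`, and `D p + 2 λ p = -q` is
impossible: if `p` has degree `n` in `λ` with leading coefficient `c`, then the left-hand side has
the term `(n + 2) c λ ^ (n + 1)`.
-/

namespace IsRingDeriv

variable {A : Type*} [CommRing A] {d : A → A}

/-- The bundled form of an unbundled derivation on a commutative ring, giving access to the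
differential-ring API. -/
@[reducible]
def differential_s10 (h : IsRingDeriv d) : Differential A where
  deriv := Derivation.mk' (AddMonoidHom.mk' d h.map_add).toIntLinearMap fun x y => by
    simp [h.leibniz, mul_comm, add_comm]

theorem map_ringHom_rat (h : IsRingDeriv d) (f : ℚ →+* A) (q : ℚ) : d (f q) = 0 := by
  let _ : Algebra ℚ A := f.toAlgebra
  exact (Derivation.mk' (AddMonoidHom.mk' d h.map_add).toRatLinearMap fun x y => by
    simp [h.leibniz, mul_comm, add_comm] : Derivation ℚ A A).map_algebraMap q

end IsRingDeriv

namespace Airy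

open Polynomial IntermediateField Differential

section DifferentialRing

theorem coeff_X_mul_derivative {R : Type*} [CommSemiring R] (p : R[X]) (n : ℕ) :
    (X * derivative p).coeff n = n * p.coeff n := by
  cases n <;> simp [coeff_derivative, mul_comm]

theorem coeff_succ_X_sq_mul_derivative {R : Type*} [CommSemiring R] (p : R[X]) (n : ℕ) :
    (X ^ 2 * derivative p).coeff (n + 1) = n * p.coeff n := by
  rw [pow_two, mul_assoc, coeff_X_mul, coeff_X_mul_derivative]

theorem coeff_implicitDeriv_linear {R : Type*} [CommRing R] [Differential R] (a b : R) (p : R[X])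
    (n : ℕ) :
    (implicitDeriv (C b * X + C a) p).coeff n =
      (p.coeff n)′ + n * b * p.coeff n + (n + 1) * a * p.coeff (n + 1) := by
  simp only [implicitDeriv, Derivation.add_apply, Derivation.smul_apply, smul_eq_mul,
    Derivation.restrictScalars_apply, derivative'_apply, add_mul, mul_assoc, coeff_add,
    coeff_mapCoeffs, coeff_C_mul, coeff_X_mul_derivative, coeff_derivative]
  ring

theorem coeff_natDegree_add_one_implicitDeriv_X_sq_sub_C {R : Type*} [CommRing R]
    [Differential R] (t : R) (p : R[X]) :
    (implicitDeriv (X ^ 2 - C t) p).coeff (p.natDegree + 1) = p.natDegree * p.leadingCoeff := by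
  have h₁ : p.coeff (p.natDegree + 1) = 0 := coeff_eq_zero_of_natDegree_lt (by omega)
  have h₂ : p.coeff (p.natDegree + 2) = 0 := coeff_eq_zero_of_natDegree_lt (by omega)
  simp only [implicitDeriv, Derivation.add_apply, Derivation.smul_apply, smul_eq_mul,
    Derivation.restrictScalars_apply, derivative'_apply, sub_mul, coeff_add, coeff_sub,
    coeff_mapCoeffs, coeff_C_mul, coeff_succ_X_sq_mul_derivative, coeff_derivative, h₁, h₂,
    Derivation.map_zero, coeff_natDegree]
  ring

section Descent

variable {K R : Type*} [Field K] [Differential K] [CommRing R] [Differential R]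
  [Algebra K R] [DifferentialAlgebra K R] {a b : K} {u : R}

theorem implicitDeriv_minpoly (hint : IsIntegral K u)
    (hu : u′ = algebraMap K R b * u + algebraMap K R a) :
    implicitDeriv (C b * X + C a) (minpoly K u) =
      C ((minpoly K u).natDegree * b) * minpoly K u := by
  have hdvd : minpoly K u ∣ implicitDeriv (C b * X + C a) (minpoly K u) -
      C ((minpoly K u).natDegree * b) * minpoly K u := by
    apply minpoly.dvd
    rw [map_sub, map_mul, ← deriv_aeval_eq_implicitDeriv u _ (by simpa using hu), minpoly.aeval]
    simp
  refine sub_eq_zero.mp (eq_zero_of_dvd_of_degree_lt hdvd ?_)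
  rw [degree_eq_natDegree (minpoly.ne_zero hint), degree_lt_iff_coeff_zero]
  intro m hm
  have htop : (minpoly K u).coeff (m + 1) = 0 := coeff_eq_zero_of_natDegree_lt (by omega)
  rw [coeff_sub, coeff_implicitDeriv_linear, coeff_C_mul, htop]
  obtain rfl | hlt := hm.eq_or_lt
  · simp [(minpoly.monic hint).coeff_natDegree]
  · simp [coeff_eq_zero_of_natDegree_lt hlt]

-- The solution in `K` is the mean of the conjugates of `u`.
theorem exists_deriv_eq_mul_add_of_isIntegral [CharZero K] [Nontrivial R] (hint : IsIntegral K u)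
    (hu : u′ = algebraMap K R b * u + algebraMap K R a) : ∃ x : K, x′ = b * x + a := by
  obtain ⟨m, hm⟩ := Nat.exists_eq_add_one.mpr (minpoly.natDegree_pos hint)
  set c := (minpoly K u).coeff m
  have hlead : (minpoly K u).coeff (m + 1) = 1 := by
    rw [← hm]
    exact (minpoly.monic hint).coeff_natDegree
  have hc : c′ = b * c - (m + 1) * a := by
    have := congrArg (coeff · m) (implicitDeriv_minpoly hint hu)
    simp only [coeff_implicitDeriv_linear, coeff_C_mul, hlead, hm, Nat.cast_add_one] at this
    linear_combination this
  have hn : (m + 1 : K) ≠ 0 := m.cast_add_one_ne_zero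
  have hn' : (m + 1 : K)′ = 0 := by
    rw [← Nat.cast_add_one]
    exact Derivation.map_natCast _ _
  refine ⟨-c / (m + 1), ?_⟩
  rw [Derivation.leibniz_div, hn', map_neg, hc]
  simp only [smul_eq_mul]
  field_simp
  ring

end Descent

-- The difference `w = s - l` satisfies `w′ = (s + l) * w`, so `w⁻¹` satisfies a linear equation.
theorem deriv_inv_sub_of_riccati {L : Type*} [Field L] [Differential L] {s l c : L}
    (hs : s′ = s ^ 2 - c) (hl : l′ = l ^ 2 - c) (hne : s ≠ l) :
    ((s - l)⁻¹)′ = -2 * l * (s - l)⁻¹ - 1 := by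
  have hsub : s - l ≠ 0 := sub_ne_zero.mpr hne
  rw [Derivation.leibniz_inv, map_sub, hs, hl, smul_eq_mul]
  field_simp
  ring

theorem eq_algebraMap_of_riccati {K L : Type*} [Field K] [CharZero K] [Differential K] [Field L]
    [Differential L] [Algebra K L] [DifferentialAlgebra K L] {l c : K} {s : L}
    (hl : l′ = l ^ 2 - c) (hlinear : ∀ x : K, x′ ≠ -2 * l * x + -1) (halg : IsAlgebraic K s)
    (hs : s′ = s ^ 2 - algebraMap K L c) : s = algebraMap K L l := by
  by_contra hne
  have hl' : (algebraMap K L l)′ = algebraMap K L l ^ 2 - algebraMap K L c := by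
    rw [deriv_algebraMap, hl, map_sub, map_pow]
  have hu : ((s - algebraMap K L l)⁻¹)′ =
      algebraMap K L (-2 * l) * (s - algebraMap K L l)⁻¹ + algebraMap K L (-1) := by
    rw [deriv_inv_sub_of_riccati hs hl' hne]
    simp only [map_neg, map_mul, map_ofNat, map_one, sub_eq_add_neg]
  have hint : IsIntegral K (s - algebraMap K L l)⁻¹ :=
    (halg.isIntegral.sub isIntegral_algebraMap).inv
  obtain ⟨x, hx⟩ := exists_deriv_eq_mul_add_of_isIntegral hint hu
  exact hlinear x hx

end DifferentialRing

section PolynomialODE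

theorem eq_natDegree_of_derivative {R : Type*} [CommRing R] [IsDomain R] {a : R} {f : R[X]}
    (hf₀ : f ≠ 0) (hf : (X ^ 2 - 1) * derivative f = C a * X * f) : a = f.natDegree := by
  have hcoeff := congrArg (coeff · (f.natDegree + 1)) hf
  have hf₂ : f.coeff (f.natDegree + 2) = 0 := coeff_eq_zero_of_natDegree_lt (by omega)
  simp only [sub_mul, one_mul, coeff_sub, coeff_succ_X_sq_mul_derivative,
    coeff_derivative, hf₂, zero_mul, sub_zero, mul_assoc, coeff_C_mul, coeff_X_mul,
    coeff_natDegree] at hcoeff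
  exact (mul_right_cancel₀ (leadingCoeff_ne_zero.mpr hf₀) hcoeff).symm

theorem X_sq_sub_one_ne_zero {R : Type*} [CommRing R] [Nontrivial R] : (X ^ 2 - 1 : R[X]) ≠ 0 :=
  X_pow_sub_C_ne_zero two_pos 1

variable {F : Type*} [Field F] [CharZero F]

theorem X_sq_sub_one_dvd {g : F[X]} (h₁ : g.eval 1 = 0) (h₂ : g.eval (-1) = 0) :
    X ^ 2 - 1 ∣ g := by
  have hfactor : (X ^ 2 - 1 : F[X]) = (X - C 1) * (X - C (-1)) := by
    simp only [C_neg, C_1]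
    ring
  rw [hfactor]
  exact (isCoprime_X_sub_C_of_isUnit_sub (by norm_num)).mul_dvd
    (dvd_iff_isRoot.mpr h₁) (dvd_iff_isRoot.mpr h₂)

-- With `h = g / (X² - 1) ^ m` the hypothesis is `h' = κ / (X² - 1)`, which has nonzero residues
-- at `±1` unless `κ = 0`.
theorem eq_zero_and_eq_C_mul_of_derivative {m : ℕ} {g : F[X]} {κ : F}
    (h : (X ^ 2 - 1) * derivative g = C (2 * m : F) * X * g + C κ * (X ^ 2 - 1) ^ m) :
    κ = 0 ∧ ∃ c, g = C c * (X ^ 2 - 1) ^ m := by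
  induction m generalizing g with
  | zero =>
    have hκ : κ = 0 := by simpa using (congrArg (eval 1) h).symm
    have hg : derivative g = 0 := by simpa [hκ, X_sq_sub_one_ne_zero] using h
    exact ⟨hκ, g.coeff 0,
      by simpa using eq_C_of_natDegree_eq_zero (derivative_eq_zero.mp hg)⟩
  | succ m ih =>
    have hm : (m + 1 : F) ≠ 0 := m.cast_add_one_ne_zero
    have h₁ : g.eval 1 = 0 := by simpa [hm] using congrArg (eval 1) h
    have h₂ : g.eval (-1) = 0 := by simpa [hm] using congrArg (eval (-1)) h
    obtain ⟨q, rfl⟩ := X_sq_sub_one_dvd h₁ h₂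
    have hq : (X ^ 2 - 1) * derivative q = C (2 * m : F) * X * q + C κ * (X ^ 2 - 1) ^ m := by
      apply mul_left_cancel₀ X_sq_sub_one_ne_zero
      simp only [derivative_mul, derivative_sub, derivative_X_sq, derivative_one, Nat.cast_add_one,
        mul_add, C_add, C_mul, mul_one] at h ⊢
      linear_combination h
    obtain ⟨hκ, c, rfl⟩ := ih hq
    exact ⟨hκ, c, by ring⟩

theorem eq_C_mul_of_derivative {m : ℕ} {f : F[X]}
    (hf : (X ^ 2 - 1) * derivative f = C (2 * m : F) * X * f) :
    ∃ c, f = C c * (X ^ 2 - 1) ^ m :=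
  (eq_zero_and_eq_C_mul_of_derivative (κ := 0) (by simpa using hf)).2

theorem eq_zero_of_derivative_eq_add {m : ℕ} {f g : F[X]} {b : F} (hf₀ : f ≠ 0)
    (hf : (X ^ 2 - 1) * derivative f = C (2 * m : F) * X * f)
    (hg : (X ^ 2 - 1) * derivative g = C (2 * m : F) * X * g + C b * f) : b = 0 := by
  obtain ⟨c, rfl⟩ := eq_C_mul_of_derivative hf
  have hbc : b * c = 0 :=
    (eq_zero_and_eq_C_mul_of_derivative (g := g) (by rw [hg, C_mul (a := b), mul_assoc (C b)])).1
  exact (mul_eq_zero.mp hbc).resolve_right (by rintro rfl; simp at hf₀)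

-- Completing the left-hand side to `w = 2 (X² - 1) h + m X f` turns the equation into
-- `(X² - 1) w' = 2 (m + 1) X w + (m - n) (X² - 1) f`.
theorem eq_natCast_of_derivative {m : ℕ} {f h : F[X]} {n : F} (hf₀ : f ≠ 0)
    (hf : (X ^ 2 - 1) * derivative f = C (2 * m : F) * X * f)
    (hh : C n * f - X * derivative f + 2 * (X ^ 2 - 1) * derivative h =
      2 * (C (2 * m : F) * X * h)) : n = m := by
  obtain ⟨c, hc⟩ := eq_C_mul_of_derivative hf
  have hw : (X ^ 2 - 1) * derivative (2 * (X ^ 2 - 1) * h + C (m : F) * X * f) =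
      C (2 * (m + 1 : ℕ) : F) * X * (2 * (X ^ 2 - 1) * h + C (m : F) * X * f) +
        C ((m - n) * c) * (X ^ 2 - 1) ^ (m + 1) := by
    have hcf : C ((m - n) * c) * (X ^ 2 - 1) ^ (m + 1) = C (m - n) * (X ^ 2 - 1) * f := by
      rw [hc, C_mul]
      ring
    rw [hcf]
    simp only [derivative_add, derivative_mul, derivative_sub, derivative_X_sq, derivative_one,
      derivative_X, derivative_C, derivative_ofNat, Nat.cast_add_one, C_mul, C_sub, C_add, C_1,
      C_ofNat] at hf hh ⊢
    linear_combination (X ^ 2 - 1) * hh + (C (m : F) + 1) * X * hf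
  have hmn : (m - n) * c = 0 := (eq_zero_and_eq_C_mul_of_derivative hw).1
  have hc₀ : c ≠ 0 := by
    rintro rfl
    simp [hc] at hf₀
  exact (sub_eq_zero.mp ((mul_eq_zero.mp hmn).resolve_right hc₀)).symm

end PolynomialODE

section Weights

variable {R : Type*} [CommRing R]

noncomputable local instance : Differential R[X] := ⟨derivative'.restrictScalars ℤ⟩

/-- The derivation `∂_t + (λ² - t) ∂_λ` of `R[t][λ]`. -/
noncomputable def airyDeriv : Derivation ℤ R[X][X] R[X][X] :=
  implicitDeriv (X ^ 2 - C X)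

/-- The substitution `t = r²`, `λ = x r` from `R[t][λ]` to `R[x][r]`. The degree in `r` is the
weighted degree for which `λ` has weight one and `t` has weight two. -/
noncomputable def weightSubst : R[X][X] →+* R[X][X] :=
  eval₂RingHom (eval₂RingHom (C.comp C) (X ^ 2)) (C X * X)

/-- The derivation `r ∂_r + (2 r³ (x² - 1) - x) ∂_x` of `R[x][r]`, which is `2 t` times the
derivation `airyDeriv` in the coordinates of `weightSubst`. -/
noncomputable def weightedAiryDeriv : Derivation ℤ R[X][X] R[X][X] :=
  (X : R[X][X]) • derivative'.restrictScalars ℤ +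
    (2 * X ^ 3 * C (X ^ 2 - 1) - C X : R[X][X]) • mapCoeffs

theorem airyDeriv_C (p : R[X]) : airyDeriv (C p) = C (derivative p) :=
  implicitDeriv_C _ p

theorem airyDeriv_X : airyDeriv (X : R[X][X]) = X ^ 2 - C X :=
  implicitDeriv_X _

theorem coeff_natDegree_add_one_airyDeriv (p : R[X][X]) :
    (airyDeriv p).coeff (p.natDegree + 1) = p.natDegree * p.leadingCoeff :=
  coeff_natDegree_add_one_implicitDeriv_X_sq_sub_C X p

theorem weightedAiryDeriv_apply (p : R[X][X]) :
    weightedAiryDeriv p =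
      X * derivative p + (2 * X ^ 3 * C (X ^ 2 - 1) - C X) * mapCoeffs p :=
  rfl

theorem weightSubst_C_C (a : R) : weightSubst (C (C a)) = C (C a) := by simp [weightSubst]

theorem weightSubst_C_X : weightSubst (C X : R[X][X]) = X ^ 2 := by simp [weightSubst]

theorem weightSubst_X : weightSubst (X : R[X][X]) = C X * X := by simp [weightSubst]

theorem weightSubst_monomial (k i : ℕ) (a : R) :
    weightSubst (monomial k (monomial i a)) = monomial (k + 2 * i) (monomial k a) := by
  simp only [← C_mul_X_pow_eq_monomial, map_mul, map_pow, weightSubst_C_C, weightSubst_C_X,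
    weightSubst_X]
  ring

theorem induction_on_monomial_monomial {P : R[X][X] → Prop} (p : R[X][X])
    (add : ∀ p q, P p → P q → P (p + q))
    (monomial : ∀ k i a, P (monomial k (monomial i a))) : P p := by
  induction p using Polynomial.induction_on' with
  | add p q hp hq => exact add p q hp hq
  | monomial k c =>
    induction c using Polynomial.induction_on' with
    | add c d hc hd => simpa only [map_add] using add _ _ hc hd
    | monomial i a => exact monomial k i a

theorem coeff_coeff_weightSubst (p : R[X][X]) (k i : ℕ) :
    ((weightSubst p).coeff (k + 2 * i)).coeff k = (p.coeff k).coeff i := by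
  induction p using induction_on_monomial_monomial with
  | add p q hp hq => simp only [map_add, coeff_add, hp, hq]
  | monomial l j a =>
    rw [weightSubst_monomial]
    by_cases hl : l = k
    · subst hl
      by_cases hj : j = i <;> simp [coeff_monomial, hj]
    · simp only [coeff_monomial, hl, if_false, coeff_zero]
      split_ifs <;> simp [coeff_monomial, hl]

theorem weightSubst_injective : Function.Injective (weightSubst : R[X][X] →+* R[X][X]) := by
  rw [injective_iff_map_eq_zero]
  intro p hp
  ext k i
  simp [← coeff_coeff_weightSubst, hp]

theorem natDegree_coeff_weightSubst_le (p : R[X][X]) (n : ℕ) :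
    ((weightSubst p).coeff n).natDegree ≤ n := by
  induction p using induction_on_monomial_monomial with
  | add p q hp hq =>
    rw [map_add, coeff_add]
    exact natDegree_add_le_of_degree_le hp hq
  | monomial k i a =>
    rw [weightSubst_monomial, coeff_monomial]
    split_ifs with h
    · exact (natDegree_monomial_le a).trans (by omega)
    · simp

theorem eq_linear_of_natDegree_weightSubst_le_one {p : R[X][X]}
    (hp : (weightSubst p).natDegree ≤ 1) : ∃ a b : R, p = C (C a) * X + C (C b) := by
  refine ⟨(p.coeff 1).coeff 0, (p.coeff 0).coeff 0, ?_⟩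
  ext k i
  by_cases hki : 2 ≤ k + 2 * i
  · have hcoeff : (weightSubst p).coeff (k + 2 * i) = 0 :=
      coeff_eq_zero_of_natDegree_lt (by omega)
    rw [← coeff_coeff_weightSubst, hcoeff]
    obtain _ | _ | k := k <;> obtain _ | i := i <;> simp_all [coeff_C, coeff_X]
  · obtain ⟨rfl, rfl⟩ | ⟨rfl, rfl⟩ : k = 0 ∧ i = 0 ∨ k = 1 ∧ i = 0 := by omega
    all_goals simp [coeff_C]

theorem weightedAiryDeriv_weightSubst (p : R[X][X]) :
    weightedAiryDeriv (weightSubst p) = 2 * X ^ 2 * weightSubst (airyDeriv p) := by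
  let S : Subsemiring R[X][X] :=
    { carrier := {p | weightedAiryDeriv (weightSubst p) = 2 * X ^ 2 * weightSubst (airyDeriv p)}
      zero_mem' := by simp
      one_mem' := by simp
      add_mem' := fun hp hq => by
        simp only [Set.mem_ofPred_eq, map_add, mul_add] at hp hq ⊢
        rw [hp, hq]
      mul_mem' := fun hp hq => by
        simp only [Set.mem_ofPred_eq, map_mul, map_add, Derivation.leibniz, smul_eq_mul] at hp hq ⊢
        rw [hp, hq]
        ring }
  have mem_S {p : R[X][X]} : p ∈ S ↔
      weightedAiryDeriv (weightSubst p) = 2 * X ^ 2 * weightSubst (airyDeriv p) := Iff.rfl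
  have deriv_C (a : R) : (C a)′ = 0 := derivative_C
  have deriv_X : (X : R[X])′ = 1 := derivative_X
  have C_C_mem (a : R) : C (C a) ∈ S := by
    simp only [mem_S, weightSubst_C_C, airyDeriv_C, weightedAiryDeriv_apply, mapCoeffs_C, deriv_C,
      derivative_C, map_zero, mul_zero, add_zero]
  have C_X_mem : C X ∈ S := by
    simp only [mem_S, weightSubst_C_X, airyDeriv_C, weightedAiryDeriv_apply,
      derivative_X, Derivation.leibniz_pow, mapCoeffs_X, map_one]
    ring
  have X_mem : X ∈ S := by
    simp only [mem_S, weightSubst_X, weightSubst_C_X, airyDeriv_X, weightedAiryDeriv_apply,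
      derivative_C, derivative_X, Derivation.leibniz, mapCoeffs_X, mapCoeffs_C, deriv_X,
      smul_eq_mul, map_sub, map_pow, map_one]
    ring
  change p ∈ S
  induction p using induction_on_monomial_monomial with
  | add p q hp hq => exact S.add_mem hp hq
  | monomial k i a =>
    simp only [← C_mul_X_pow_eq_monomial, C_mul, C_pow]
    exact S.mul_mem (S.mul_mem (C_C_mem a) (S.pow_mem C_X_mem i)) (S.pow_mem X_mem k)

theorem coeff_weightedAiryDeriv (p : R[X][X]) (n : ℕ) :
    (weightedAiryDeriv p).coeff n = (n : R[X]) * p.coeff n - X * derivative (p.coeff n) +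
      2 * (X ^ 2 - 1) * derivative ((X ^ 3 * p).coeff n) := by
  have coeff_X_pow_mul_mapCoeffs :
      (X ^ 3 * mapCoeffs p).coeff n = derivative ((X ^ 3 * p).coeff n) := by
    have : mapCoeffs (X ^ 3 * p) = X ^ 3 * mapCoeffs p := by simp [Derivation.leibniz]
    rw [← this, coeff_mapCoeffs]
    rfl
  have expand : weightedAiryDeriv p = X * derivative p - C X * mapCoeffs p +
      C (2 * (X ^ 2 - 1)) * (X ^ 3 * mapCoeffs p) := by
    simp only [weightedAiryDeriv_apply, C_mul, C_ofNat]
    ring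
  rw [expand, coeff_add, coeff_sub, coeff_C_mul, coeff_C_mul, coeff_mapCoeffs,
    coeff_X_mul_derivative, coeff_X_pow_mul_mapCoeffs]
  rfl

theorem natDegree_weightedAiryDeriv_le (p : R[X][X]) :
    (weightedAiryDeriv p).natDegree ≤ p.natDegree + 3 := by
  refine natDegree_le_iff_coeff_eq_zero.mpr fun n hn => ?_
  have hp : p.coeff n = 0 := coeff_eq_zero_of_natDegree_lt (by omega)
  have hXp : (X ^ 3 * p).coeff n = 0 := by
    rw [coeff_X_pow_mul', if_pos (by omega)]
    exact coeff_eq_zero_of_natDegree_lt (by omega)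
  simp [coeff_weightedAiryDeriv, hp, hXp]

theorem coeff_weightSubst_of_airyDeriv_eq {p : R[X][X]} {a b : R}
    (h : airyDeriv p = (C (C a) * X + C (C b)) * p) (n : ℕ) :
    (n : R[X]) * (weightSubst p).coeff n - X * derivative ((weightSubst p).coeff n) +
        2 * (X ^ 2 - 1) * derivative ((X ^ 3 * weightSubst p).coeff n) =
      2 * (C a * X * (X ^ 3 * weightSubst p).coeff n + C b * (X ^ 2 * weightSubst p).coeff n) := by
  have hcofactor : weightedAiryDeriv (weightSubst p) =
      C (2 * (C a * X)) * (X ^ 3 * weightSubst p) + C (2 * C b) * (X ^ 2 * weightSubst p) := by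
    simp only [weightedAiryDeriv_weightSubst, h, map_add, map_mul, weightSubst_C_C, weightSubst_X,
      C_ofNat]
    ring
  rw [← coeff_weightedAiryDeriv, hcofactor, coeff_add, coeff_C_mul, coeff_C_mul]
  ring

variable {F : Type*} [Field F] [CharZero F]

theorem exists_cofactor_eq_linear {p g : F[X][X]} (hp : p ≠ 0) (h : airyDeriv p = g * p) :
    ∃ a b : F, g = C (C a) * X + C (C b) := by
  apply eq_linear_of_natDegree_weightSubst_le_one
  obtain hg | hg := eq_or_ne (weightSubst g) 0
  · simp [hg]
  have hp' : weightSubst p ≠ 0 := (map_ne_zero_iff _ weightSubst_injective).mpr hp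
  have hle := natDegree_weightedAiryDeriv_le (weightSubst p)
  have htwo : (2 : F[X][X]) = C 2 := rfl
  rw [weightedAiryDeriv_weightSubst, h, map_mul, mul_assoc, htwo, natDegree_C_mul two_ne_zero,
    natDegree_X_pow_mul _ (mul_ne_zero hg hp'), natDegree_mul hg hp'] at hle
  omega

theorem eq_zero_of_airyDeriv_eq_linear_mul {p : F[X][X]} {a b : F} (hp : p ≠ 0)
    (h : airyDeriv p = (C (C a) * X + C (C b)) * p)
    (heven : Even (weightSubst p).leadingCoeff.natDegree) : a = 0 ∧ b = 0 := by
  have hcoeff := coeff_weightSubst_of_airyDeriv_eq h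
  set G := weightSubst p
  set N := G.natDegree
  set f := G.leadingCoeff
  obtain ⟨m, hm⟩ := heven
  have hf₀ : f ≠ 0 := leadingCoeff_ne_zero.mpr ((map_ne_zero_iff _ weightSubst_injective).mpr hp)
  have hG {n : ℕ} (hn : N < n) : G.coeff n = 0 := coeff_eq_zero_of_natDegree_lt hn
  have hfa : (X ^ 2 - 1) * derivative f = C a * X * f := by
    have := hcoeff (N + 3)
    rw [coeff_X_pow_mul G 3 N, coeff_X_pow_mul G 2 (N + 1),
      hG (n := N + 3) (by omega), hG (n := N + 1) (by omega)] at this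
    apply mul_left_cancel₀ (two_ne_zero (α := F[X]))
    simpa [mul_assoc, f, N] using this
  obtain rfl : a = 2 * m := by
    rw [eq_natDegree_of_derivative hf₀ hfa, hm]
    push_cast
    ring
  have hb : b = 0 := by
    refine eq_zero_of_derivative_eq_add (g := (X ^ 3 * G).coeff (N + 2)) hf₀ hfa ?_
    have := hcoeff (N + 2)
    rw [coeff_X_pow_mul G 2 N, hG (by omega)] at this
    apply mul_left_cancel₀ (two_ne_zero (α := F[X]))
    simpa [mul_assoc, f, N] using this
  have hN : N = m := by
    have := eq_natCast_of_derivative (n := (N : F)) (h := (X ^ 3 * G).coeff N) hf₀ hfa (by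
      simpa [hb, f, N] using hcoeff N)
    exact_mod_cast this
  have hdeg : f.natDegree ≤ N := natDegree_coeff_weightSubst_le p N
  obtain rfl : m = 0 := by omega
  exact ⟨by simp, hb⟩

theorem cofactor_eq_zero {p g : F[X][X]} (hp : p ≠ 0) (h : airyDeriv p = g * p) : g = 0 := by
  -- Squaring `p` makes the degree of the leading coefficient even.
  have hsq : airyDeriv (p ^ 2) = 2 * g * p ^ 2 := by
    rw [Derivation.leibniz_pow, h]
    simp only [Nat.add_one_sub_one, pow_one, smul_eq_mul, nsmul_eq_mul, Nat.cast_ofNat]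
    ring
  obtain ⟨a, b, hab⟩ := exists_cofactor_eq_linear (pow_ne_zero 2 hp) hsq
  have heven : Even (weightSubst (p ^ 2)).leadingCoeff.natDegree := by
    simp [map_pow, leadingCoeff_pow, natDegree_pow]
  obtain ⟨rfl, rfl⟩ := eq_zero_of_airyDeriv_eq_linear_mul (pow_ne_zero 2 hp) (hab ▸ hsq) heven
  simpa using hab

theorem natDegree_eq_zero_of_airyDeriv_eq_zero {p : F[X][X]} (h : airyDeriv p = 0) :
    p.natDegree = 0 := by
  have htop := coeff_natDegree_add_one_airyDeriv p
  rw [h, coeff_zero] at htop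
  obtain hdeg | hp := mul_eq_zero.mp htop.symm
  · exact_mod_cast hdeg
  · rw [leadingCoeff_eq_zero.mp hp, natDegree_zero]

theorem airyDeriv_mul_sub_mul_airyDeriv_ne {p q : F[X][X]} (hq : q ≠ 0) (hpq : IsRelPrime p q) :
    airyDeriv p * q - p * airyDeriv q ≠ -2 * X * p * q - q ^ 2 := by
  intro h
  have hdvd : q ∣ p * airyDeriv q := ⟨airyDeriv p + 2 * X * p + q, by linear_combination -h⟩
  obtain ⟨g, hg⟩ := hpq.symm.dvd_of_dvd_mul_left hdvd
  have hDq : airyDeriv q = 0 := by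
    rw [hg, cofactor_eq_zero hq (hg.trans (mul_comm q g)), mul_zero]
  have hDp : airyDeriv p + 2 * (X * p) = -q := by
    apply mul_right_cancel₀ hq
    linear_combination h + p * hDq
  have hqdeg := natDegree_eq_zero_of_airyDeriv_eq_zero hDq
  have htop : ((p.natDegree + 2 : ℕ) : F[X]) * p.leadingCoeff = 0 := by
    have hcoeff := congrArg (coeff · (p.natDegree + 1)) hDp
    have hq₁ : q.coeff (p.natDegree + 1) = 0 := coeff_eq_zero_of_natDegree_lt (by omega)
    simp only [coeff_add, coeff_neg, hq₁, coeff_ofNat_mul, coeff_X_mul, neg_zero,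
      coeff_natDegree_add_one_airyDeriv, coeff_natDegree] at hcoeff
    rw [← hcoeff]
    push_cast
    ring
  have hp : p = 0 :=
    leadingCoeff_eq_zero.mp ((mul_eq_zero.mp htop).resolve_left (Nat.cast_ne_zero.mpr (by omega)))
  exact hq (by simpa [hp] using hDp.symm)

end Weights

section FunctionField

variable {A k K : Type*} [CommRing A] [IsDomain A] [Field k] [Algebra A k] [IsFractionRing A k]
  [Field K] [Algebra A K] [Algebra k K] [IsScalarTower A k K]

theorem exists_aeval_eq_algebraMap_mul_aeval (l : K) (r : k[X]) :
    ∃ b : A, b ≠ 0 ∧ ∃ p : A[X], aeval l p = algebraMap A K b * aeval l r := by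
  obtain ⟨b, hb, hbr⟩ := IsLocalization.integerNormalization_spec (nonZeroDivisors A) r
  refine ⟨b, nonZeroDivisors.ne_zero hb,
    IsLocalization.integerNormalization (nonZeroDivisors A) r, ?_⟩
  rw [← aeval_map_algebraMap k, hbr, ← algebraMap_smul k b r, map_smul, Algebra.smul_def,
    ← IsScalarTower.algebraMap_apply]

theorem exists_isRelPrime_mul_aeval_eq [UniqueFactorizationMonoid A] {l : K}
    (hl : Transcendental A l) (hgen : k⟮l⟯ = ⊤) (x : K) :
    ∃ p q : A[X], q ≠ 0 ∧ IsRelPrime p q ∧ x * aeval l q = aeval l p := by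
  have haeval {p : A[X]} : aeval l p ≠ 0 ↔ p ≠ 0 :=
    map_ne_zero_iff _ (transcendental_iff_injective.mp hl)
  obtain ⟨p, q, hq, hpq⟩ : ∃ p q : A[X], q ≠ 0 ∧ x * aeval l q = aeval l p := by
    obtain ⟨r, s, rfl⟩ := (mem_adjoin_simple_iff k x).mp (hgen ▸ mem_top)
    by_cases hs : aeval l s = 0
    · exact ⟨0, 1, one_ne_zero, by simp [hs]⟩
    obtain ⟨b, hb, p, hp⟩ := exists_aeval_eq_algebraMap_mul_aeval (A := A) l r
    obtain ⟨c, hc, q, hq⟩ := exists_aeval_eq_algebraMap_mul_aeval (A := A) l s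
    have hq₀ : q ≠ 0 := by
      rw [← haeval, hq, ← aeval_C (R := A)]
      exact mul_ne_zero (haeval.mpr (C_ne_zero.mpr hc)) hs
    refine ⟨C c * p, C b * q, mul_ne_zero (C_ne_zero.mpr hb) hq₀, ?_⟩
    simp only [map_mul, aeval_C, hp, hq]
    field_simp
  obtain ⟨p', q', e, hrel, rfl, rfl⟩ := UniqueFactorizationMonoid.exists_reduced_factors' p q hq
  refine ⟨p', q', right_ne_zero_of_mul hq, hrel, ?_⟩
  apply mul_left_cancel₀ (haeval.mpr (left_ne_zero_of_mul hq))
  simpa only [map_mul, mul_left_comm] using hpq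

end FunctionField

section Uniqueness

variable {F : Type*} [Field F]

theorem map_algebraMap_polynomial {A : Type*} [CommRing A] [Algebra F[X] A] {d : A → A}
    (hd : IsRingDeriv d) (hC : ∀ c, d (algebraMap F[X] A (C c)) = 0)
    (hX : d (algebraMap F[X] A X) = 1) (p : F[X]) :
    d (algebraMap F[X] A p) = algebraMap F[X] A (derivative p) := by
  induction p using Polynomial.induction_on with
  | C c => simp [hC]
  | add p q hp hq => simp only [map_add, hd.map_add, hp, hq]
  | monomial n c ih =>
    rw [pow_succ, ← mul_assoc, map_mul, hd.leibniz, ih, hX, derivative_mul (g := X), derivative_X]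
    simp only [map_add, map_mul, map_one]

variable [CharZero F] {K : Type*} [Field K] [Algebra F[X] K] [Algebra (RatFunc F) K]
  [IsScalarTower F[X] (RatFunc F) K] {l : K}

theorem deriv_ne_neg_two_mul_add_neg_one [Differential K]
    (hpoly : ∀ p : F[X], (algebraMap F[X] K p)′ = algebraMap F[X] K (derivative p))
    (hl : Transcendental (RatFunc F) l) (hgen : (RatFunc F)⟮l⟯ = ⊤)
    (hderiv : l′ = l ^ 2 - algebraMap F[X] K X) (x : K) : x′ ≠ -2 * l * x + -1 := by
  intro hx
  have hl' : Transcendental F[X] l :=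
    hl.restrictScalars (IsFractionRing.injective F[X] (RatFunc F))
  obtain ⟨p, q, hq, hpq, hxpq⟩ := exists_isRelPrime_mul_aeval_eq hl' hgen x
  let _ : Differential F[X] := ⟨derivative'.restrictScalars ℤ⟩
  have : DifferentialAlgebra F[X] K := ⟨hpoly⟩
  have deriv_aeval (p : F[X][X]) : (aeval l p)′ = aeval l (airyDeriv p) :=
    deriv_aeval_eq_implicitDeriv l _ (by simpa using hderiv) p
  refine airyDeriv_mul_sub_mul_airyDeriv_ne hq hpq (transcendental_iff_injective.mp hl' ?_)
  have hdx := congrArg (·′) hxpq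
  simp only [Derivation.leibniz, smul_eq_mul, hx, deriv_aeval] at hdx
  simp only [map_sub, map_mul, map_neg, map_pow, map_ofNat, aeval_X, ← hxpq, ← hdx]
  ring

end Uniqueness

end Airy

theorem stmt_10_general {F : Type*} [Field F] [CharZero F]
    (δk : RatFunc F → RatFunc F) (hconst : ∀ c : F, δk (algebraMap F (RatFunc F) c) = 0)
    (hX : δk RatFunc.X = 1)
    {K : Type*} [Field K] [Algebra (RatFunc F) K]
    (lam : K) (htrans : Transcendental (RatFunc F) lam)
    (hgen : IntermediateField.adjoin (RatFunc F) {lam} = ⊤)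
    (δK : K → K) (hδK : IsRingDeriv δK) (hres : RestrictsTo δk δK)
    (hlam : δK lam = lam ^ 2 - algebraMap (RatFunc F) K RatFunc.X)
    {L : Type*} [Field L] [Algebra K L]
    (δL : L → L) (hδL : IsRingDeriv δL) (hresL : RestrictsTo δK δL)
    (σ : L) (halg : IsAlgebraic K σ)
    (hσ : δL σ = σ ^ 2 - algebraMap K L (algebraMap (RatFunc F) K RatFunc.X)) :
    σ = algebraMap K L lam := by
  let _ := hδK.differential_s10
  let _ := hδL.differential_s10
  let _ : Algebra (Polynomial F) K :=
    ((algebraMap (RatFunc F) K).comp (algebraMap (Polynomial F) (RatFunc F))).toAlgebra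
  have : IsScalarTower (Polynomial F) (RatFunc F) K := .of_algebraMap_eq fun _ => rfl
  have : DifferentialAlgebra K L := ⟨hresL⟩
  have : CharZero K := charZero_of_injective_algebraMap (algebraMap (RatFunc F) K).injective
  have hpoly := Airy.map_algebraMap_polynomial hδK
    (fun c => by
      rw [IsScalarTower.algebraMap_apply (Polynomial F) (RatFunc F) K, hres, RatFunc.algebraMap_C,
        ← RatFunc.algebraMap_eq_C, hconst, map_zero])
    (by
      rw [IsScalarTower.algebraMap_apply (Polynomial F) (RatFunc F) K, hres, RatFunc.algebraMap_X,
        hX, map_one])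
  have hlam' : δK lam = lam ^ 2 - algebraMap (Polynomial F) K Polynomial.X := by
    rw [hlam, IsScalarTower.algebraMap_apply (Polynomial F) (RatFunc F) K, RatFunc.algebraMap_X]
  exact Airy.eq_algebraMap_of_riccati hlam
    (Airy.deriv_ne_neg_two_mul_add_neg_one hpoly htrans hgen hlam') halg hσ

/-- Let `k = ℚ(t)` with `t′ = 1` and let `K = k(λ)` with `λ`
transcendental over `k` and `λ′ = λ² − t`. Then `λ` is the unique solution of
`X′ = X² − t` in the algebraic closure of `K`. -/
theorem stmt_10
    (δk : RatFunc ℚ → RatFunc ℚ) (hδk : IsRingDeriv δk) (hX : δk RatFunc.X = 1)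
    (K : Type*) [Field K] [Algebra (RatFunc ℚ) K]
    (lam : K) (htrans : Transcendental (RatFunc ℚ) lam)
    (hgen : IntermediateField.adjoin (RatFunc ℚ) {lam} = ⊤)
    (δK : K → K) (hδK : IsRingDeriv δK) (hres : RestrictsTo δk δK)
    (hlam : δK lam = lam ^ 2 - algebraMap (RatFunc ℚ) K RatFunc.X)
    (Kb : Type*) [Field Kb] [Algebra K Kb] [IsAlgClosure K Kb]
    (δKb : Kb → Kb) (hδKb : IsRingDeriv δKb) (hresKb : RestrictsTo δK δKb)
    (σ : Kb)
    (hσ : δKb σ = σ ^ 2 - algebraMap K Kb (algebraMap (RatFunc ℚ) K RatFunc.X)) :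
    σ = algebraMap K Kb lam := by
  exact stmt_10_general δk (hδk.map_ringHom_rat _) hX lam htrans hgen δK hδK hres hlam δKb hδKb
    hresKb σ (IsAlgClosure.isAlgebraic.isAlgebraic σ) hσ
end
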